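/- arXiv:2307.12665 — 5 statements merged into one kernel-verified Lean document; each statement's English description precedes it below -/
import Mathlib

section
/- Let u be a regularized solution on [0,T] such that 0 < u(t,x) ≤ C₁ on [0,T] × 𝕋_L, ∫∫_{Q_T} (f_ε(u) u_xxx)² dx dt ≤ A, and |u(t,x₁) − u(t,x₂)| ≤ K |x₁ − x₂|^{1/2} for all t ∈ [0,T] and x₁, x₂. Then there exists a constant M ≥ 0, depending only on L, λ, C₁, A and K (and in particular not on ε), such that |u(t₁,x₀) − u(t₂,x₀)| ≤ M |t₁ − t₂|^{1/8} for every x₀ ∈ 𝕋_L and all t₁, t₂ ∈ [0,T] with |t₁ − t₂| ≤ 1. -/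
/-!
The equation gives `u_t = -(J_x + u^λ)` with flux `J = f_ε(u) u_xxx`, which is bounded in
`L²(Q_T)`. Over a short interval `[a, a + δ]` the equation is tested against the parabola
`φ(x) = (x - a)(a + δ - x)`. It vanishes at both ends, so `J_x` integrates by parts without
boundary terms; moreover `|φ'| ≤ δ`, `0 ≤ φ ≤ δ²` and `∫ φ = δ³ / 6`. For `h = t₂ - t₁`, Young's
inequality `|J| ≤ (η J² + 1/η) / 2` yields (`tested_increment_le`)

  `|∫ (u(t₂) - u(t₁)) φ| ≤ δ η A / 2 + h δ² / (2 η) + C₁^λ h δ³`.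

By the Hölder bound in space, replacing `u(t₂,x) - u(t₁,x)` by its value at `x = a` changes the
left side by at most `2 K δ^{1/2} δ³ / 6`. The choice `h = r⁸`, `δ = c r²`, `η = r⁵` with
`c = min 1 L` makes all four terms at most a multiple of `δ³ r = δ³ h^{1/8}`; `c ≤ L` ensures that
`[a, a + δ]` lies in one period, so that the `L²` bound on `J` applies.

Smoothness is only assumed on the strip `[0,T] × ℝ`. `contDiffOn_deriv_snd` propagates it to
`x`-derivatives, and composing with the projection of `t` onto `[0,T]` turns functions continuous
on the strip into globally continuous ones.
-/


open MeasureTheory Set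

noncomputable section

/-- The regularized mobility `f_ε(s) = s⁴ / (ε + s²)` (which also equals `0` at `s = 0`). -/
def fe (ε s : ℝ) : ℝ := s ^ 4 / (ε + s ^ 2)

/-- A regularized solution on `[0,T]`: a function `u`, smooth on `[0,T] × ℝ` and
`L`-periodic in `x`, positive everywhere, satisfying
`u_t + ∂_x(f_ε(u) ∂_x³ u) + u^λ = 0` on `[0,T] × ℝ`. -/
def IsRegSol (L T lam ε : ℝ) (u : ℝ → ℝ → ℝ) : Prop :=
  ContDiffOn ℝ (⊤ : ℕ∞) (fun p : ℝ × ℝ => u p.1 p.2)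
      (Set.Icc (0 : ℝ) T ×ˢ (Set.univ : Set ℝ)) ∧
  (∀ t x : ℝ, u t (x + L) = u t x) ∧
  (∀ t x : ℝ, 0 < u t x) ∧
  (∀ t ∈ Set.Icc (0 : ℝ) T, ∀ x : ℝ,
    derivWithin (fun s => u s x) (Set.Icc (0 : ℝ) T) t
      + deriv (fun y => fe ε (u t y) * iteratedDeriv 3 (u t) y) x
      + u t x ^ lam = 0)

lemma integral_swap_of_continuous {F : ℝ → ℝ → ℝ} (hF : Continuous (Function.uncurry F))
    {a b c d : ℝ} (hab : a ≤ b) (hcd : c ≤ d) :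
    ∫ x in a..b, ∫ t in c..d, F t x = ∫ t in c..d, ∫ x in a..b, F t x := by
  simp only [intervalIntegral.integral_of_le hab, intervalIntegral.integral_of_le hcd]
  refine integral_integral_swap (f := fun x t => F t x) ?_
  rw [Measure.prod_restrict]
  have hc : Continuous (Function.uncurry fun x t => F t x) := hF.comp continuous_swap
  exact (hc.continuousOn.integrableOn_compact (isCompact_Icc.prod isCompact_Icc)).mono_set
    (prod_mono Ioc_subset_Icc_self Ioc_subset_Icc_self)

/-- A function continuous on the strip `[0,T] × ℝ` becomes continuous on the plane after
projecting `t` onto `[0,T]`. -/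
lemma continuous_comp_projIcc {T : ℝ} (hT : 0 ≤ T) {F : ℝ × ℝ → ℝ}
    (hF : ContinuousOn F (Icc (0 : ℝ) T ×ˢ (univ : Set ℝ))) :
    Continuous (Function.uncurry fun t x => F ((projIcc 0 T hT t : ℝ), x)) := by
  refine hF.comp_continuous (f := fun p : ℝ × ℝ => ((projIcc 0 T hT p.1 : ℝ), p.2)) ?_ ?_
  · exact ((continuous_subtype_val.comp continuous_projIcc).comp continuous_fst).prodMk
      continuous_snd
  · intro p
    exact ⟨(projIcc 0 T hT p.1).2, mem_univ _⟩

lemma hasDerivAt_snd {T : ℝ} {F : ℝ → ℝ → ℝ}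
    (hF : ContDiffOn ℝ (⊤ : ℕ∞) (fun p : ℝ × ℝ => F p.1 p.2) (Icc (0 : ℝ) T ×ˢ (univ : Set ℝ)))
    {t : ℝ} (ht : t ∈ Icc (0 : ℝ) T) (x : ℝ) :
    HasDerivAt (F t) (fderivWithin ℝ (fun p : ℝ × ℝ => F p.1 p.2)
      (Icc (0 : ℝ) T ×ˢ (univ : Set ℝ)) (t, x) (0, 1)) x := by
  have h1 := (hF.differentiableOn (by simp) (t, x) ⟨ht, mem_univ _⟩).hasFDerivWithinAt
  have h2 : HasDerivWithinAt (fun y : ℝ => (t, y)) ((0 : ℝ), (1 : ℝ)) univ x :=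
    ((hasDerivAt_const x t).prodMk (hasDerivAt_id x)).hasDerivWithinAt
  have h3 := h1.comp_hasDerivWithinAt x h2 (fun y _ => ⟨ht, mem_univ _⟩)
  exact hasDerivWithinAt_univ.mp h3

lemma contDiffOn_deriv_snd {T : ℝ} (hT : 0 < T) {F : ℝ → ℝ → ℝ}
    (hF : ContDiffOn ℝ (⊤ : ℕ∞) (fun p : ℝ × ℝ => F p.1 p.2) (Icc (0 : ℝ) T ×ˢ (univ : Set ℝ))) :
    ContDiffOn ℝ (⊤ : ℕ∞) (fun p : ℝ × ℝ => deriv (F p.1) p.2)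
      (Icc (0 : ℝ) T ×ˢ (univ : Set ℝ)) := by
  have hS : UniqueDiffOn ℝ (Icc (0 : ℝ) T ×ˢ (univ : Set ℝ)) :=
    (uniqueDiffOn_Icc hT).prod uniqueDiffOn_univ
  have h := (hF.fderivWithin (m := (⊤ : ℕ∞)) hS (by simp)).clm_apply
    (contDiffOn_const (c := ((0 : ℝ), (1 : ℝ))))
  exact h.congr fun p hp => (hasDerivAt_snd hF hp.1 p.2).deriv

lemma contDiffOn_iteratedDeriv_snd {T : ℝ} (hT : 0 < T) {F : ℝ → ℝ → ℝ}
    (hF : ContDiffOn ℝ (⊤ : ℕ∞) (fun p : ℝ × ℝ => F p.1 p.2) (Icc (0 : ℝ) T ×ˢ (univ : Set ℝ)))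
    (n : ℕ) :
    ContDiffOn ℝ (⊤ : ℕ∞) (fun p : ℝ × ℝ => iteratedDeriv n (F p.1) p.2)
      (Icc (0 : ℝ) T ×ˢ (univ : Set ℝ)) := by
  induction n with
  | zero => simpa using hF
  | succ n ih =>
    simp only [iteratedDeriv_succ]
    exact contDiffOn_deriv_snd hT (F := fun t => iteratedDeriv n (F t)) ih

lemma contDiff_fe {ε : ℝ} (hε : 0 < ε) : ContDiff ℝ (⊤ : ℕ∞) (fe ε) := by
  unfold fe
  exact (contDiff_id.pow 4).div (contDiff_const.add (contDiff_id.pow 2))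
    fun s => by positivity

lemma iteratedDeriv_periodic {f : ℝ → ℝ} {L : ℝ} (hf : Function.Periodic f L) (n : ℕ) :
    Function.Periodic (iteratedDeriv n f) L := by
  intro x
  have h : (fun y => f (y + L)) = f := funext hf
  have h2 := congrFun (iteratedDeriv_comp_add_const n f L) x
  rw [h] at h2
  exact h2.symm

lemma hasDerivAt_parabola (a δ x : ℝ) :
    HasDerivAt (fun x : ℝ => (x - a) * (a + δ - x)) (2 * a + δ - 2 * x) x := by
  have h := ((hasDerivAt_id x).sub_const a).mul ((hasDerivAt_id x).const_sub (a + δ))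
  refine h.congr_deriv ?_
  simp only [id]
  ring

lemma integral_parabola (a δ : ℝ) :
    ∫ x in a..a + δ, (x - a) * (a + δ - x) = δ ^ 3 / 6 := by
  have h : ∀ x ∈ uIcc a (a + δ), HasDerivAt
      (fun x : ℝ => δ * (x - a) ^ 2 / 2 - (x - a) ^ 3 / 3) ((x - a) * (a + δ - x)) x := by
    intro x _
    have h1 := (hasDerivAt_id x).sub_const a
    have h2 := (((h1.pow 2).const_mul δ).div_const 2).sub ((h1.pow 3).div_const 3)
    refine h2.congr_deriv ?_
    simp only [id]
    norm_num
    ring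
  rw [intervalIntegral.integral_eq_sub_of_hasDerivAt h
    (Continuous.intervalIntegrable (by fun_prop) _ _)]
  ring

/-- The increment `v = u(t₂) - u(t₁) = -∫ (J_x + W) dt`, tested against a parabola vanishing at
the ends of `[a, a + δ]`, is controlled by the `L²` norm of `J` and the sup norm of `W`. The
parameter `η` is the weight in Young's inequality. -/
lemma tested_increment_le {J R W : ℝ → ℝ → ℝ} {v : ℝ → ℝ} {a δ t₁ t₂ η A C : ℝ}
    (hJ : Continuous (Function.uncurry J)) (hR : Continuous (Function.uncurry R))
    (hW : Continuous (Function.uncurry W)) (hδ : 0 < δ) (hη : 0 < η) (ht : t₁ ≤ t₂)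
    (hJR : ∀ t x, HasDerivAt (J t) (R t x) x)
    (hv : ∀ x, v x = -∫ t in t₁..t₂, (R t x + W t x))
    (hA : ∫ t in t₁..t₂, ∫ x in a..a + δ, J t x ^ 2 ≤ A)
    (hC : ∀ t x, |W t x| ≤ C) :
    |∫ x in a..a + δ, v x * ((x - a) * (a + δ - x))| ≤
      δ * η * A / 2 + (t₂ - t₁) * δ ^ 2 / (2 * η) + C * (t₂ - t₁) * δ ^ 3 := by
  have hab : a ≤ a + δ := by linarith
  have hJt : ∀ t, Continuous (J t) := fun t => hJ.comp (Continuous.prodMk_right t)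
  have hRt : ∀ t, Continuous (R t) := fun t => hR.comp (Continuous.prodMk_right t)
  have hWt : ∀ t, Continuous (W t) := fun t => hW.comp (Continuous.prodMk_right t)
  have hF : Continuous (Function.uncurry fun t x =>
      -(R t x + W t x) * ((x - a) * (a + δ - x))) := by
    have : Continuous fun p : ℝ × ℝ => (p.2 - a) * (a + δ - p.2) := by fun_prop
    exact (hR.add hW).neg.mul this
  have key : ∫ x in a..a + δ, v x * ((x - a) * (a + δ - x)) =
      ∫ t in t₁..t₂, ∫ x in a..a + δ, -(R t x + W t x) * ((x - a) * (a + δ - x)) := by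
    rw [← integral_swap_of_continuous hF hab ht]
    refine intervalIntegral.integral_congr fun x _ => ?_
    simp only [hv, intervalIntegral.integral_mul_const, intervalIntegral.integral_neg]
  have inner : ∀ t, ∫ x in a..a + δ, -(R t x + W t x) * ((x - a) * (a + δ - x)) =
      ∫ x in a..a + δ, (J t x * (2 * a + δ - 2 * x) - W t x * ((x - a) * (a + δ - x))) := by
    intro t
    have parts := intervalIntegral.integral_mul_deriv_eq_deriv_mul (a := a) (b := a + δ)
      (fun x _ => hJR t x) (fun x _ => hasDerivAt_parabola a δ x)
      ((hRt t).intervalIntegrable _ _) (Continuous.intervalIntegrable (by fun_prop) _ _)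
    simp only [sub_self, mul_zero, zero_mul, zero_sub] at parts
    have e : ∀ x, -(R t x + W t x) * ((x - a) * (a + δ - x)) =
        -(R t x * ((x - a) * (a + δ - x))) - W t x * ((x - a) * (a + δ - x)) := fun x => by ring
    have := hJt t
    have := hRt t
    have := hWt t
    simp only [e]
    rw [intervalIntegral.integral_sub (Continuous.intervalIntegrable (by fun_prop) _ _)
      (Continuous.intervalIntegrable (by fun_prop) _ _),
      intervalIntegral.integral_sub (Continuous.intervalIntegrable (by fun_prop) _ _)
      (Continuous.intervalIntegrable (by fun_prop) _ _), parts, intervalIntegral.integral_neg]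
  have hJ2 : Continuous (Function.uncurry fun t x => J t x ^ 2) := hJ.pow 2
  have hI := intervalIntegral.continuous_parametric_intervalIntegral_of_continuous'
    (μ := volume) hJ2 a (a + δ)
  have bound : ∀ t, ‖∫ x in a..a + δ,
      (J t x * (2 * a + δ - 2 * x) - W t x * ((x - a) * (a + δ - x)))‖ ≤
      δ * η / 2 * (∫ x in a..a + δ, J t x ^ 2) + (δ ^ 2 / (2 * η) + C * δ ^ 3) := by
    intro t
    have hJ2t : Continuous fun x => J t x ^ 2 := (hJt t).pow 2
    have h1 := intervalIntegral.norm_integral_le_of_norm_le (μ := volume) hab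
      (f := fun x => J t x * (2 * a + δ - 2 * x) - W t x * ((x - a) * (a + δ - x)))
      (g := fun x => δ * η / 2 * J t x ^ 2 + (δ / (2 * η) + C * δ ^ 2)) ?_
      (Continuous.intervalIntegrable (by fun_prop) _ _)
    · refine h1.trans (le_of_eq ?_)
      rw [intervalIntegral.integral_add (Continuous.intervalIntegrable (by fun_prop) _ _)
        (Continuous.intervalIntegrable (by fun_prop) _ _), intervalIntegral.integral_const_mul,
        intervalIntegral.integral_const]
      simp only [add_sub_cancel_left, smul_eq_mul]
      ring
    · refine Filter.Eventually.of_forall fun x hx => ?_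
      have hx1 : 0 ≤ x - a := by linarith [hx.1]
      have hx2 : 0 ≤ a + δ - x := by linarith [hx.2]
      have hd : |2 * a + δ - 2 * x| ≤ δ := abs_le.mpr ⟨by linarith, by linarith⟩
      have hp : |(x - a) * (a + δ - x)| ≤ δ ^ 2 := by
        rw [abs_of_nonneg (mul_nonneg hx1 hx2)]
        nlinarith
      have hy : |J t x| ≤ η / 2 * J t x ^ 2 + 1 / (2 * η) := by
        have h0 : 0 ≤ (η * |J t x| - 1) ^ 2 / (2 * η) := by positivity
        have h1 : (η * |J t x| - 1) ^ 2 / (2 * η) =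
            η / 2 * J t x ^ 2 + 1 / (2 * η) - |J t x| := by
          rw [← sq_abs (J t x)]
          field_simp
          ring
        linarith
      calc ‖J t x * (2 * a + δ - 2 * x) - W t x * ((x - a) * (a + δ - x))‖
          ≤ |J t x * (2 * a + δ - 2 * x)| + |W t x * ((x - a) * (a + δ - x))| := abs_sub _ _
        _ = |J t x| * |2 * a + δ - 2 * x| + |W t x| * |(x - a) * (a + δ - x)| := by
          rw [abs_mul, abs_mul]
        _ ≤ (η / 2 * J t x ^ 2 + 1 / (2 * η)) * δ + C * δ ^ 2 := by
          have hC0 : 0 ≤ C := (abs_nonneg _).trans (hC t x)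
          have := hC t x
          gcongr
        _ = δ * η / 2 * J t x ^ 2 + (δ / (2 * η) + C * δ ^ 2) := by ring
  rw [key]
  simp only [inner]
  have h2 := intervalIntegral.norm_integral_le_of_norm_le (μ := volume) ht
    (Filter.Eventually.of_forall fun t _ => bound t)
    (Continuous.intervalIntegrable (by fun_prop) _ _)
  rw [intervalIntegral.integral_add (Continuous.intervalIntegrable (by fun_prop) _ _)
    (Continuous.intervalIntegrable (by fun_prop) _ _), intervalIntegral.integral_const_mul,
    intervalIntegral.integral_const, smul_eq_mul] at h2
  refine h2.trans ?_
  have h3 : δ * η / 2 * (∫ t in t₁..t₂, ∫ x in a..a + δ, J t x ^ 2) ≤ δ * η / 2 * A := by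
    gcongr
  calc _ ≤ δ * η / 2 * A + (t₂ - t₁) * (δ ^ 2 / (2 * η) + C * δ ^ 3) := by linarith
    _ = _ := by ring

/-- If `v` deviates from `v a` by at most `H` on `[a, a + δ]`, then `v a` is controlled by the
integral of `v` against the parabola, whose total mass is `δ³ / 6`. -/
lemma abs_le_of_tested {v : ℝ → ℝ} {a δ B H : ℝ} (hvc : Continuous v) (hδ : 0 < δ)
    (hH : ∀ x ∈ Ioc a (a + δ), |v a - v x| ≤ H)
    (hB : |∫ x in a..a + δ, v x * ((x - a) * (a + δ - x))| ≤ B) :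
    |v a| * (δ ^ 3 / 6) ≤ B + H * (δ ^ 3 / 6) := by
  have hab : a ≤ a + δ := by linarith
  have h1 := intervalIntegral.norm_integral_le_of_norm_le (μ := volume) hab
    (f := fun x => (v a - v x) * ((x - a) * (a + δ - x)))
    (g := fun x => H * ((x - a) * (a + δ - x)))
    (Filter.Eventually.of_forall fun x hx => by
      have hx1 : 0 ≤ x - a := by linarith [hx.1]
      have hx2 : 0 ≤ a + δ - x := by linarith [hx.2]
      have hp := mul_nonneg hx1 hx2
      rw [Real.norm_eq_abs, abs_mul, abs_of_nonneg hp]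
      exact mul_le_mul_of_nonneg_right (hH x hx) hp)
    (Continuous.intervalIntegrable (by fun_prop) _ _)
  simp only [sub_mul (v a)] at h1
  rw [intervalIntegral.integral_sub (Continuous.intervalIntegrable (by fun_prop) _ _)
    (Continuous.intervalIntegrable (by fun_prop) _ _), intervalIntegral.integral_const_mul,
    intervalIntegral.integral_const_mul, integral_parabola, Real.norm_eq_abs] at h1
  have h2 : |v a * (δ ^ 3 / 6)| = |v a| * (δ ^ 3 / 6) := by
    rw [abs_mul, abs_of_pos (by positivity : 0 < δ ^ 3 / 6)]
  have h3 := abs_sub_abs_le_abs_sub (v a * (δ ^ 3 / 6))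
    (∫ x in a..a + δ, v x * ((x - a) * (a + δ - x)))
  linarith

set_option maxHeartbeats 800000 in
/-- The estimate for `t₁ < t₂`, before the interval length `δ` and the Young weight `η` are
chosen. -/
lemma increment_estimate {L T lam ε C₁ A K : ℝ} {u : ℝ → ℝ → ℝ} (hL : 0 < L) (hlam : 1 ≤ lam)
    (hT : 0 < T) (hε : 0 < ε) (hu : IsRegSol L T lam ε u)
    (hC : ∀ t ∈ Icc (0 : ℝ) T, ∀ x : ℝ, u t x ≤ C₁)
    (hA : (∫ t in (0 : ℝ)..T, ∫ x in (0 : ℝ)..L,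
      (fe ε (u t x) * iteratedDeriv 3 (u t) x) ^ 2) ≤ A)
    (hK : ∀ t ∈ Icc (0 : ℝ) T, ∀ x₁ x₂ : ℝ,
      |u t x₁ - u t x₂| ≤ K * |x₁ - x₂| ^ ((1 : ℝ) / 2))
    (a : ℝ) {t₁ t₂ : ℝ} (h1 : t₁ ∈ Icc (0 : ℝ) T) (h2 : t₂ ∈ Icc (0 : ℝ) T) (ht : t₁ < t₂)
    {δ η : ℝ} (hδ : 0 < δ) (hδL : δ ≤ L) (hη : 0 < η) :
    |u t₂ a - u t₁ a| * (δ ^ 3 / 6) ≤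
      (δ * η * A / 2 + (t₂ - t₁) * δ ^ 2 / (2 * η) + C₁ ^ lam * (t₂ - t₁) * δ ^ 3)
        + 2 * |K| * δ ^ ((1 : ℝ) / 2) * (δ ^ 3 / 6) := by
  obtain ⟨hsm, hper, hpos, heq⟩ := hu
  set S : Set (ℝ × ℝ) := Icc (0 : ℝ) T ×ˢ (univ : Set ℝ) with hS
  let J₀ : ℝ → ℝ → ℝ := fun t x => fe ε (u t x) * iteratedDeriv 3 (u t) x
  have hJ₀ : ContDiffOn ℝ (⊤ : ℕ∞) (fun p : ℝ × ℝ => J₀ p.1 p.2) S :=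
    ((contDiff_fe hε).comp_contDiffOn hsm).mul (contDiffOn_iteratedDeriv_snd hT hsm 3)
  have hR₀ := contDiffOn_deriv_snd hT hJ₀
  have hW₀ : ContinuousOn (fun p : ℝ × ℝ => u p.1 p.2 ^ lam) S :=
    hsm.continuousOn.rpow_const fun p _ => Or.inl (hpos _ _).ne'
  let π : ℝ → ℝ := fun t => (projIcc 0 T hT.le t : ℝ)
  have hπ : ∀ t, π t ∈ Icc (0 : ℝ) T := fun t => (projIcc 0 T hT.le t).2
  have hπid : ∀ t ∈ Icc (0 : ℝ) T, π t = t := fun t ht => by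
    simp only [π, projIcc_of_mem hT.le ht]
  have hJ : Continuous (Function.uncurry fun t x => J₀ (π t) x) :=
    continuous_comp_projIcc hT.le hJ₀.continuousOn
  have hR : Continuous (Function.uncurry fun t x => deriv (J₀ (π t)) x) :=
    continuous_comp_projIcc hT.le hR₀.continuousOn
  have hW : Continuous (Function.uncurry fun t x => u (π t) x ^ lam) :=
    continuous_comp_projIcc hT.le hW₀
  have hut : ∀ t ∈ Icc (0 : ℝ) T, Continuous (u t) := fun t ht =>
    continuous_iff_continuousAt.mpr fun x => (hasDerivAt_snd hsm ht x).continuousAt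
  have hv : ∀ x, u t₂ x - u t₁ x =
      -∫ t in t₁..t₂, (deriv (J₀ (π t)) x + u (π t) x ^ lam) := by
    intro x
    have hux : ContDiffOn ℝ (⊤ : ℕ∞) (fun s => u s x) (Icc 0 T) :=
      hsm.comp (f := fun s : ℝ => (s, x)) (contDiff_id.prodMk contDiff_const).contDiffOn
        fun s hs => ⟨hs, mem_univ _⟩
    have hcR : Continuous fun t => deriv (J₀ (π t)) x :=
      hR.comp (f := fun t => (t, x)) (Continuous.prodMk_left x)
    have hcW : Continuous fun t => u (π t) x ^ lam :=
      hW.comp (f := fun t => (t, x)) (Continuous.prodMk_left x)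
    rw [← intervalIntegral.integral_neg, intervalIntegral.integral_eq_sub_of_hasDerivAt_of_le
      (f := fun s => u s x) ht.le]
    · exact hux.continuousOn.mono (Icc_subset_Icc h1.1 h2.2)
    · intro t htt
      have h0 : 0 < t := h1.1.trans_lt htt.1
      have hT' : t < T := htt.2.trans_le h2.2
      have hm : t ∈ Icc (0 : ℝ) T := ⟨h0.le, hT'.le⟩
      have hd := ((hux.differentiableOn (by simp) t hm).hasDerivWithinAt).hasDerivAt
        (Icc_mem_nhds h0 hT')
      refine hd.congr_deriv ?_
      have := heq t hm x
      rw [hπid t hm]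
      simp only [J₀]
      linarith
    · exact (hcR.add hcW).neg.intervalIntegrable _ _
  have hL2 : ∫ t in t₁..t₂, ∫ x in a..a + δ, J₀ (π t) x ^ 2 ≤ A := by
    have hJ2 : Continuous (Function.uncurry fun t x => J₀ (π t) x ^ 2) := hJ.pow 2
    have hJ2t : ∀ t, Continuous fun x => J₀ (π t) x ^ 2 :=
      fun t => hJ2.comp (f := fun x => (t, x)) (Continuous.prodMk_right t)
    have hI := intervalIntegral.continuous_parametric_intervalIntegral_of_continuous'
      (μ := volume) hJ2 a (a + δ)
    have hI' := intervalIntegral.continuous_parametric_intervalIntegral_of_continuous'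
      (μ := volume) hJ2 0 L
    have hin : ∀ t, ∫ x in a..a + δ, J₀ (π t) x ^ 2 ≤ ∫ x in (0 : ℝ)..L, J₀ (π t) x ^ 2 := by
      intro t
      have hp : Function.Periodic (fun x => J₀ (π t) x ^ 2) L := by
        intro x
        have := iteratedDeriv_periodic (f := u (π t)) (L := L) (hper (π t)) 3 x
        simp only [J₀, hper (π t) x, this]
      have e := hp.intervalIntegral_add_eq a 0
      rw [zero_add] at e
      rw [← e]
      exact intervalIntegral.integral_mono_interval le_rfl (by linarith) (by linarith)
        (Filter.Eventually.of_forall fun x => sq_nonneg _) ((hJ2t t).intervalIntegrable _ _)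
    calc ∫ t in t₁..t₂, ∫ x in a..a + δ, J₀ (π t) x ^ 2
        ≤ ∫ t in t₁..t₂, ∫ x in (0 : ℝ)..L, J₀ (π t) x ^ 2 :=
          intervalIntegral.integral_mono ht.le (hI.intervalIntegrable _ _)
            (hI'.intervalIntegrable _ _) hin
      _ ≤ ∫ t in (0 : ℝ)..T, ∫ x in (0 : ℝ)..L, J₀ (π t) x ^ 2 :=
          intervalIntegral.integral_mono_interval h1.1 ht.le h2.2
            (Filter.Eventually.of_forall fun t =>
              intervalIntegral.integral_nonneg hL.le fun x _ => sq_nonneg _)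
            (hI'.intervalIntegrable _ _)
      _ = ∫ t in (0 : ℝ)..T, ∫ x in (0 : ℝ)..L, J₀ t x ^ 2 := by
          refine intervalIntegral.integral_congr fun t htt => ?_
          rw [uIcc_of_le hT.le] at htt
          simp only [hπid t htt]
      _ ≤ A := hA
  have htest := tested_increment_le (a := a) (C := C₁ ^ lam) hJ hR hW hδ hη ht.le
    (fun t x => (hasDerivAt_snd hJ₀ (hπ t) x).differentiableAt.hasDerivAt) hv hL2
    (fun t x => by
      have hp := hpos (π t) x
      change |u (π t) x ^ lam| ≤ _
      rw [abs_of_nonneg (Real.rpow_nonneg hp.le _)]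
      exact Real.rpow_le_rpow hp.le (hC _ (hπ t) x) (by linarith))
  refine abs_le_of_tested (v := fun x => u t₂ x - u t₁ x) ((hut t₂ h2).sub (hut t₁ h1)) hδ ?_ htest
  intro x hx
  have hax : |a - x| ≤ δ := abs_le.mpr ⟨by linarith [hx.2], by linarith [hx.1]⟩
  have hKx : K * |a - x| ^ ((1 : ℝ) / 2) ≤ |K| * δ ^ ((1 : ℝ) / 2) :=
    mul_le_mul (le_abs_self K) (Real.rpow_le_rpow (abs_nonneg _) hax (by norm_num))
      (Real.rpow_nonneg (abs_nonneg _) _) (abs_nonneg _)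
  have e1 := hK t₁ h1 a x
  have e2 := hK t₂ h2 a x
  calc |u t₂ a - u t₁ a - (u t₂ x - u t₁ x)| = |(u t₂ a - u t₂ x) - (u t₁ a - u t₁ x)| := by
        ring_nf
    _ ≤ |u t₂ a - u t₂ x| + |u t₁ a - u t₁ x| := abs_sub _ _
    _ ≤ 2 * |K| * δ ^ ((1 : ℝ) / 2) := by linarith

/-- The previous estimate with `t₂ - t₁ = r⁸`, `δ = c r²` and `η = r⁵`. -/
lemma increment_le {L T lam ε C₁ A K : ℝ} {u : ℝ → ℝ → ℝ} (hL : 0 < L) (hlam : 1 ≤ lam)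
    (hT : 0 < T) (hε : 0 < ε) (hu : IsRegSol L T lam ε u)
    (hC : ∀ t ∈ Icc (0 : ℝ) T, ∀ x : ℝ, u t x ≤ C₁)
    (hA : (∫ t in (0 : ℝ)..T, ∫ x in (0 : ℝ)..L,
      (fe ε (u t x) * iteratedDeriv 3 (u t) x) ^ 2) ≤ A)
    (hK : ∀ t ∈ Icc (0 : ℝ) T, ∀ x₁ x₂ : ℝ,
      |u t x₁ - u t x₂| ≤ K * |x₁ - x₂| ^ ((1 : ℝ) / 2))
    (a : ℝ) {t₁ t₂ : ℝ} (h1 : t₁ ∈ Icc (0 : ℝ) T) (h2 : t₂ ∈ Icc (0 : ℝ) T) (ht : t₁ < t₂)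
    (ht1 : t₂ - t₁ ≤ 1) :
    |u t₂ a - u t₁ a| ≤ (2 * |K| + 3 * |A| / (min 1 L) ^ 2 + 3 / min 1 L + 6 * |C₁| ^ lam) *
      (t₂ - t₁) ^ ((1 : ℝ) / 8) := by
  have hh : 0 < t₂ - t₁ := by linarith
  set r := (t₂ - t₁) ^ ((1 : ℝ) / 8) with hr
  have hr0 : 0 < r := Real.rpow_pos_of_pos hh _
  have hr1 : r ≤ 1 := Real.rpow_le_one hh.le ht1 (by norm_num)
  have hr8 : t₂ - t₁ = r ^ 8 := by
    rw [hr, ← Real.rpow_natCast, ← Real.rpow_mul hh.le]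
    norm_num
  set c := min 1 L with hc
  have hc0 : 0 < c := lt_min one_pos hL
  have hc1 : c ≤ 1 := min_le_left _ _
  have hcL : c ≤ L := min_le_right _ _
  have hC₁ : 0 < C₁ := (hu.2.2.1 t₁ a).trans_le (hC t₁ h1 a)
  rw [abs_of_pos hC₁]
  have hCl : 0 < C₁ ^ lam := Real.rpow_pos_of_pos hC₁ _
  have hδ : 0 < c * r ^ 2 := by positivity
  have hδL : c * r ^ 2 ≤ L := by
    have : r ^ 2 ≤ 1 := pow_le_one₀ hr0.le hr1
    nlinarith
  have hδr : (c * r ^ 2) ^ ((1 : ℝ) / 2) ≤ r := by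
    rw [← Real.sqrt_eq_rpow]
    refine Real.sqrt_le_iff.mpr ⟨hr0.le, ?_⟩
    nlinarith [sq_nonneg r]
  have key := increment_estimate hL hlam hT hε hu hC hA hK a h1 h2 ht hδ hδL
    (η := r ^ 5) (by positivity)
  rw [hr8] at key
  have hr87 : r ^ 8 ≤ r := pow_le_of_le_one hr0.le hr1 (by norm_num)
  have hpos : 0 < (c * r ^ 2) ^ 3 / 6 := by positivity
  refine le_of_mul_le_mul_right (key.trans ?_) hpos
  calc c * r ^ 2 * r ^ 5 * A / 2 + r ^ 8 * (c * r ^ 2) ^ 2 / (2 * r ^ 5)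
        + C₁ ^ lam * r ^ 8 * (c * r ^ 2) ^ 3
        + 2 * |K| * (c * r ^ 2) ^ ((1 : ℝ) / 2) * ((c * r ^ 2) ^ 3 / 6)
      ≤ c * r ^ 2 * r ^ 5 * |A| / 2 + r ^ 8 * (c * r ^ 2) ^ 2 / (2 * r ^ 5)
        + C₁ ^ lam * r * (c * r ^ 2) ^ 3 + 2 * |K| * r * ((c * r ^ 2) ^ 3 / 6) := by
        gcongr
        exact le_abs_self A
    _ = (2 * |K| + 3 * |A| / c ^ 2 + 3 / c + 6 * C₁ ^ lam) * r * ((c * r ^ 2) ^ 3 / 6) := by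
        field_simp
        ring

/-- Uniform-in-`ε` Hölder continuity in time (with exponent 1/8) of regularized
solutions satisfying uniform bounds. -/
theorem regularized_holder_in_time
    (L lam C₁ A K : ℝ) (hL : 0 < L) (hlam : 1 ≤ lam) :
    ∃ M : ℝ, 0 ≤ M ∧
      ∀ T ε : ℝ, 0 < T → 0 < ε → ∀ u : ℝ → ℝ → ℝ,
        IsRegSol L T lam ε u →
        (∀ t ∈ Set.Icc (0 : ℝ) T, ∀ x : ℝ, u t x ≤ C₁) →
        ((∫ t in (0 : ℝ)..T, ∫ x in (0 : ℝ)..L,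
            (fe ε (u t x) * iteratedDeriv 3 (u t) x) ^ 2) ≤ A) →
        (∀ t ∈ Set.Icc (0 : ℝ) T, ∀ x₁ x₂ : ℝ,
            |u t x₁ - u t x₂| ≤ K * |x₁ - x₂| ^ ((1 : ℝ) / 2)) →
        ∀ x₀ : ℝ, ∀ t₁ ∈ Set.Icc (0 : ℝ) T, ∀ t₂ ∈ Set.Icc (0 : ℝ) T,
          |t₁ - t₂| ≤ 1 →
          |u t₁ x₀ - u t₂ x₀| ≤ M * |t₁ - t₂| ^ ((1 : ℝ) / 8) := by
  have hc : 0 < min 1 L := lt_min one_pos hL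
  have hC := Real.rpow_nonneg (abs_nonneg C₁) lam
  have hM : 0 ≤ 2 * |K| + 3 * |A| / (min 1 L) ^ 2 + 3 / min 1 L + 6 * |C₁| ^ lam := by
    positivity
  refine ⟨2 * |K| + 3 * |A| / (min 1 L) ^ 2 + 3 / min 1 L + 6 * |C₁| ^ lam, hM, ?_⟩
  intro T ε hT hε u hu hC₁ hA hK x₀ t₁ h1 t₂ h2 h12
  rcases lt_trichotomy t₁ t₂ with h | h | h
  · rw [abs_sub_comm t₁ t₂, abs_of_pos (sub_pos.mpr h)] at h12 ⊢
    rw [abs_sub_comm]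
    exact increment_le hL hlam hT hε hu hC₁ hA hK x₀ h1 h2 h h12
  · subst h
    rw [sub_self, abs_zero]
    positivity
  · rw [abs_of_pos (sub_pos.mpr h)] at h12 ⊢
    exact increment_le hL hlam hT hε hu hC₁ hA hK x₀ h2 h1 h h12

end
end

section
/- Let u be a regularized solution on [0,T]. Then for every t ∈ [0,T] one has the energy identity (1/2) ∫₀^L u_x(t,x)² dx + ∫₀^t ∫₀^L f_ε(u(s,x)) u_xxx(s,x)² dx ds + λ ∫₀^t ∫₀^L u(s,x)^{λ−1} u_x(s,x)² dx ds = (1/2) ∫₀^L u_x(0,x)² dx. In particular t ↦ ∫₀^L u_x(t,x)² dx is nonincreasing. -/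
/-!
The energy identity rests on one pointwise computation. Write `F = f_ε(u) u_xxx` for the flux, so
that the equation reads `F_x = -(u_t + u^λ)`, and put `G = u_xx F + u_x (u_t + u^λ)`. The product
rule gives
`G_x = f_ε(u) u_xxx² + λ u^(λ-1) u_x² + u_x u_xt`,
the terms `u_xx F_x` and `u_xx (u_t + u^λ)` cancelling. As `G` is `L`-periodic in `x`, the right-hand
side has vanishing integral over a period (`integral_dissipation_eq_zero`). On the other hand
`u_x(t,x)² - u_x(0,x)² = ∫₀ᵗ 2 u_x u_xt ds`; integrating in `x` and exchanging the integrals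
(`integral_sq_sub_integral_sq`) turns the previous fact into the energy identity. Monotonicity
follows since both dissipation terms are nonnegative.

Since `u` is only smooth on the closed strip `[0,T] × ℝ`, its partial derivatives are taken as
`fderivWithin` on the strip in the directions `(0,1)` and `(1,0)` (`dx`, `dt`); the symmetry of the
second derivative within the strip (`dt_dx_eq_dx_dt`) holds up to the boundary.
-/


open MeasureTheory Set

noncomputable section

/-- The closed space-time strip `[0,T] × ℝ`. -/
def strip (T : ℝ) : Set (ℝ × ℝ) := Icc (0 : ℝ) T ×ˢ (univ : Set ℝ)

/-- The partial derivative in `x` on the strip, as a directional derivative within the strip. -/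
def dx (T : ℝ) (g : ℝ × ℝ → ℝ) (p : ℝ × ℝ) : ℝ := fderivWithin ℝ g (strip T) p (0, 1)

/-- The partial derivative in `t` on the strip, one-sided at `t = 0` and `t = T`. -/
def dt (T : ℝ) (g : ℝ × ℝ → ℝ) (p : ℝ × ℝ) : ℝ := fderivWithin ℝ g (strip T) p (1, 0)

lemma mem_strip {T t : ℝ} (ht : t ∈ Icc (0 : ℝ) T) (x : ℝ) : (t, x) ∈ strip T :=
  ⟨ht, mem_univ x⟩

lemma uniqueDiffOn_strip {T : ℝ} (hT : 0 < T) : UniqueDiffOn ℝ (strip T) :=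
  (uniqueDiffOn_Icc hT).prod uniqueDiffOn_univ

lemma contDiffOn_fderivWithin_strip {T : ℝ} (hT : 0 < T) {g : ℝ × ℝ → ℝ}
    (hg : ContDiffOn ℝ (⊤ : ℕ∞) g (strip T)) :
    ContDiffOn ℝ (⊤ : ℕ∞) (fderivWithin ℝ g (strip T)) (strip T) :=
  hg.fderivWithin (uniqueDiffOn_strip hT) (by simp)

lemma contDiffOn_dx {T : ℝ} (hT : 0 < T) {g : ℝ × ℝ → ℝ}
    (hg : ContDiffOn ℝ (⊤ : ℕ∞) g (strip T)) : ContDiffOn ℝ (⊤ : ℕ∞) (dx T g) (strip T) :=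
  (contDiffOn_fderivWithin_strip hT hg).clm_apply contDiffOn_const

lemma contDiffOn_dt {T : ℝ} (hT : 0 < T) {g : ℝ × ℝ → ℝ}
    (hg : ContDiffOn ℝ (⊤ : ℕ∞) g (strip T)) : ContDiffOn ℝ (⊤ : ℕ∞) (dt T g) (strip T) :=
  (contDiffOn_fderivWithin_strip hT hg).clm_apply contDiffOn_const

lemma hasDerivAt_dx {T : ℝ} {g : ℝ × ℝ → ℝ} (hg : ContDiffOn ℝ (⊤ : ℕ∞) g (strip T))
    {t : ℝ} (ht : t ∈ Icc (0 : ℝ) T) (x : ℝ) :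
    HasDerivAt (fun y => g (t, y)) (dx T g (t, x)) x := by
  have h := (hg.differentiableOn (by simp) (t, x) (mem_strip ht x)).hasFDerivWithinAt
  have h2 : HasDerivWithinAt (fun y : ℝ => (t, y)) (0, 1) univ x :=
    (hasDerivWithinAt_const x univ t).prodMk (hasDerivWithinAt_id x univ)
  rw [← hasDerivWithinAt_univ]
  exact h.comp_hasDerivWithinAt x h2 (fun y _ => mem_strip ht y)

lemma hasDerivWithinAt_dt {T : ℝ} {g : ℝ × ℝ → ℝ} (hg : ContDiffOn ℝ (⊤ : ℕ∞) g (strip T))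
    {t : ℝ} (ht : t ∈ Icc (0 : ℝ) T) (x : ℝ) :
    HasDerivWithinAt (fun s => g (s, x)) (dt T g (t, x)) (Icc (0 : ℝ) T) t := by
  have h := (hg.differentiableOn (by simp) (t, x) (mem_strip ht x)).hasFDerivWithinAt
  have h2 : HasDerivWithinAt (fun s : ℝ => (s, x)) (1, 0) (Icc (0 : ℝ) T) t :=
    (hasDerivWithinAt_id t _).prodMk (hasDerivWithinAt_const t _ x)
  exact h.comp_hasDerivWithinAt t h2 (fun s hs => mem_strip hs x)

/-- Schwarz's theorem on the strip, boundary points included. -/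
lemma dt_dx_eq_dx_dt {T : ℝ} (hT : 0 < T) {g : ℝ × ℝ → ℝ}
    (hg : ContDiffOn ℝ (⊤ : ℕ∞) g (strip T)) {p : ℝ × ℝ} (hp : p ∈ strip T) :
    dt T (dx T g) p = dx T (dt T g) p := by
  have hU := uniqueDiffOn_strip hT p hp
  have hd : DifferentiableWithinAt ℝ (fderivWithin ℝ g (strip T)) (strip T) p :=
    (contDiffOn_fderivWithin_strip hT hg).differentiableOn (by simp) p hp
  have key (v w : ℝ × ℝ) :
      fderivWithin ℝ (fun q => fderivWithin ℝ g (strip T) q v) (strip T) p w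
        = fderivWithin ℝ (fderivWithin ℝ g (strip T)) (strip T) p w v := by
    rw [fderivWithin_clm_apply hU hd (differentiableWithinAt_const v)]
    simp
  have hcl : p ∈ closure (interior (strip T)) := by
    rw [strip, interior_prod_eq, interior_Icc, interior_univ, closure_prod_eq,
      closure_Ioo hT.ne, closure_univ]
    exact hp
  have hs := (hg p hp).isSymmSndFDerivWithinAt
    (by simpa using WithTop.coe_le_coe.2 (le_top : (2 : ℕ∞) ≤ ⊤)) (uniqueDiffOn_strip hT) hcl hp
  unfold dt dx
  rw [key, key]
  exact hs _ _

/-- Freezing time outside `[0,T]` extends a function continuous on the strip to the plane. -/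
lemma continuous_extend {T : ℝ} (hT : 0 < T) {g : ℝ × ℝ → ℝ} (hg : ContinuousOn g (strip T)) :
    Continuous (fun p : ℝ × ℝ => g ((projIcc 0 T hT.le p.1 : ℝ), p.2)) :=
  hg.comp_continuous (by fun_prop) (fun p => mem_strip (projIcc 0 T hT.le p.1).2 p.2)

lemma continuousOn_integral_strip {T L : ℝ} (hT : 0 < T) {g : ℝ × ℝ → ℝ}
    (hg : ContinuousOn g (strip T)) :
    ContinuousOn (fun s => ∫ x in (0 : ℝ)..L, g (s, x)) (Icc (0 : ℝ) T) := by
  have h := intervalIntegral.continuous_parametric_intervalIntegral_of_continuous'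
    (μ := volume) (f := fun s x => g ((projIcc 0 T hT.le s : ℝ), x)) (continuous_extend hT hg) 0 L
  refine h.continuousOn.congr fun s hs => ?_
  simp only [projIcc_of_mem hT.le hs]

lemma integral_swap_strip {T L t : ℝ} (hT : 0 < T) (ht : t ∈ Icc (0 : ℝ) T) {g : ℝ × ℝ → ℝ}
    (hg : ContinuousOn g (strip T)) :
    ∫ x in (0 : ℝ)..L, ∫ s in (0 : ℝ)..t, g (s, x)
      = ∫ s in (0 : ℝ)..t, ∫ x in (0 : ℝ)..L, g (s, x) := by
  have hc := continuous_extend hT hg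
  have hsub : uIcc 0 t ⊆ Icc 0 T := by
    rw [uIcc_of_le ht.1]
    exact Icc_subset_Icc_right ht.2
  have h1 : ∀ x, ∫ s in (0 : ℝ)..t, g (s, x)
      = ∫ s in (0 : ℝ)..t, g ((projIcc 0 T hT.le s : ℝ), x) := fun x =>
    intervalIntegral.integral_congr fun s hs => by simp only [projIcc_of_mem hT.le (hsub hs)]
  have h2 : ∫ s in (0 : ℝ)..t, ∫ x in (0 : ℝ)..L, g (s, x)
      = ∫ s in (0 : ℝ)..t, ∫ x in (0 : ℝ)..L, g ((projIcc 0 T hT.le s : ℝ), x) :=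
    intervalIntegral.integral_congr fun s hs => by simp only [projIcc_of_mem hT.le (hsub hs)]
  rw [h2]
  simp only [h1]
  refine intervalIntegral_intervalIntegral_swap
    (F := fun x s => g ((projIcc 0 T hT.le s : ℝ), x)) ?_
  have hc' : Continuous (Function.uncurry fun x s => g ((projIcc 0 T hT.le s : ℝ), x)) :=
    hc.comp continuous_swap
  exact (hc'.continuousOn.integrableOn_compact (isCompact_uIcc.prod isCompact_uIcc)).mono_set
    (prod_mono uIoc_subset_uIcc uIoc_subset_uIcc)

/-- The change of `∫ g² dx` in time, for `g` smooth on the strip. -/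
lemma integral_sq_sub_integral_sq {T L t : ℝ} (hT : 0 < T) (ht : t ∈ Icc (0 : ℝ) T)
    {g : ℝ × ℝ → ℝ} (hg : ContDiffOn ℝ (⊤ : ℕ∞) g (strip T)) :
    (∫ x in (0 : ℝ)..L, g (t, x) ^ 2) - ∫ x in (0 : ℝ)..L, g (0, x) ^ 2
      = 2 * ∫ s in (0 : ℝ)..t, ∫ x in (0 : ℝ)..L, g (s, x) * dt T g (s, x) := by
  have hgt := contDiffOn_dt hT hg
  have hc : ContinuousOn (fun p => g p * dt T g p) (strip T) :=
    hg.continuousOn.mul hgt.continuousOn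
  have hslice {h : ℝ × ℝ → ℝ} (hh : ContinuousOn h (strip T)) {s : ℝ} (hs : s ∈ Icc 0 T) :
      Continuous (fun x => h (s, x)) :=
    hh.comp_continuous (by fun_prop) (fun x => mem_strip hs x)
  have h0 : (0 : ℝ) ∈ Icc 0 T := ⟨le_rfl, hT.le⟩
  have hsub : Icc 0 t ⊆ Icc 0 T := Icc_subset_Icc_right ht.2
  have hftc (x : ℝ) : g (t, x) ^ 2 - g (0, x) ^ 2
      = ∫ s in (0 : ℝ)..t, 2 * (g (s, x) * dt T g (s, x)) := by
    have hline : ContinuousOn (fun s : ℝ => (s, x)) (Icc 0 t) := by fun_prop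
    have hmaps : MapsTo (fun s : ℝ => (s, x)) (Icc 0 t) (strip T) :=
      fun s hs => mem_strip (hsub hs) x
    symm
    refine intervalIntegral.integral_eq_sub_of_hasDerivAt_of_le
      (f := fun s => g (s, x) ^ 2) ht.1 ?_ ?_ ?_
    · exact (hg.continuousOn.comp hline hmaps).pow 2
    · intro s hs
      have hs' : s ∈ Icc 0 T := hsub (Ioo_subset_Icc_self hs)
      have h := (hasDerivWithinAt_dt hg hs' x).hasDerivAt
        (Icc_mem_nhds hs.1 (hs.2.trans_le ht.2))
      exact (h.pow 2).congr_deriv (by simp; ring)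
    · apply ContinuousOn.intervalIntegrable
      rw [uIcc_of_le ht.1]
      exact continuousOn_const.mul (hc.comp hline hmaps)
  have hsq {s : ℝ} (hs : s ∈ Icc 0 T) : IntervalIntegrable (fun x => g (s, x) ^ 2) volume 0 L :=
    ((hslice hg.continuousOn hs).pow 2).intervalIntegrable _ _
  rw [← intervalIntegral.integral_sub (hsq ht) (hsq h0)]
  simp only [hftc, intervalIntegral.integral_const_mul]
  rw [integral_swap_strip hT ht hc]

lemma deriv_periodic {f : ℝ → ℝ} {L : ℝ} (h : ∀ x, f (x + L) = f x) (x : ℝ) :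
    deriv f (x + L) = deriv f x := by
  rw [← deriv_comp_add_const]
  simp only [h]

lemma fe_nonneg {ε : ℝ} (hε : 0 < ε) (s : ℝ) : 0 ≤ fe ε s := by
  unfold fe
  positivity

lemma differentiable_fe {ε : ℝ} (hε : 0 < ε) : Differentiable ℝ (fe ε) := by
  unfold fe
  intro s
  have : ε + s ^ 2 ≠ 0 := by positivity
  fun_prop (disch := assumption)

section Solution

variable {L T lam ε : ℝ} {u : ℝ → ℝ → ℝ}

lemma IsRegSol.contDiffOn (hu : IsRegSol L T lam ε u) :
    ContDiffOn ℝ (⊤ : ℕ∞) (fun p : ℝ × ℝ => u p.1 p.2) (strip T) := hu.1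

lemma deriv_eq_dx (hu : IsRegSol L T lam ε u) {t : ℝ} (ht : t ∈ Icc (0 : ℝ) T) :
    deriv (u t) = fun x => dx T (fun p => u p.1 p.2) (t, x) :=
  funext fun x => (hasDerivAt_dx hu.contDiffOn ht x).deriv

lemma deriv_deriv_eq_dx (hT : 0 < T) (hu : IsRegSol L T lam ε u) {t : ℝ}
    (ht : t ∈ Icc (0 : ℝ) T) :
    deriv (deriv (u t)) = fun x => dx T (dx T (fun p => u p.1 p.2)) (t, x) := by
  rw [deriv_eq_dx hu ht]
  exact funext fun x => (hasDerivAt_dx (contDiffOn_dx hT hu.contDiffOn) ht x).deriv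

lemma iteratedDeriv_three_eq_dx (hT : 0 < T) (hu : IsRegSol L T lam ε u) {t : ℝ}
    (ht : t ∈ Icc (0 : ℝ) T) :
    iteratedDeriv 3 (u t) = fun x => dx T (dx T (dx T (fun p => u p.1 p.2))) (t, x) := by
  rw [iteratedDeriv_succ, iteratedDeriv_succ, iteratedDeriv_one, deriv_deriv_eq_dx hT hu ht]
  exact funext fun x =>
    (hasDerivAt_dx (contDiffOn_dx hT (contDiffOn_dx hT hu.contDiffOn)) ht x).deriv

lemma continuousOn_mobility_term (hT : 0 < T) (hε : 0 < ε) (hu : IsRegSol L T lam ε u) :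
    ContinuousOn (fun p : ℝ × ℝ =>
      fe ε (u p.1 p.2) * dx T (dx T (dx T (fun p => u p.1 p.2))) p ^ 2) (strip T) :=
  ((differentiable_fe hε).continuous.comp_continuousOn hu.contDiffOn.continuousOn).mul
    ((contDiffOn_dx hT (contDiffOn_dx hT (contDiffOn_dx hT hu.contDiffOn))).continuousOn.pow 2)

lemma continuousOn_absorption_term (hT : 0 < T) (hu : IsRegSol L T lam ε u) :
    ContinuousOn (fun p : ℝ × ℝ =>
      u p.1 p.2 ^ (lam - 1) * dx T (fun p => u p.1 p.2) p ^ 2) (strip T) :=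
  (hu.contDiffOn.continuousOn.rpow_const fun p _ => Or.inl (hu.2.2.1 p.1 p.2).ne').mul
    ((contDiffOn_dx hT hu.contDiffOn).continuousOn.pow 2)

/-- At each fixed time the integrand is the `x`-derivative of the periodic function
`u_xx F + u_x (u_t + u^λ)`, where `F = f_ε(u) u_xxx`. -/
lemma integral_dissipation_eq_zero (hT : 0 < T) (hε : 0 < ε)
    (hu : IsRegSol L T lam ε u) {t : ℝ} (ht : t ∈ Icc (0 : ℝ) T) :
    ∫ x in (0 : ℝ)..L,
      (fe ε (u t x) * dx T (dx T (dx T (fun p => u p.1 p.2))) (t, x) ^ 2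
        + lam * (u t x ^ (lam - 1) * dx T (fun p => u p.1 p.2) (t, x) ^ 2)
        + dx T (fun p => u p.1 p.2) (t, x) * dt T (dx T (fun p => u p.1 p.2)) (t, x)) = 0 := by
  have hU := hu.contDiffOn
  have e1 := deriv_eq_dx hu ht
  have e2 := deriv_deriv_eq_dx hT hu ht
  have e3 := iteratedDeriv_three_eq_dx hT hu ht
  have cA := continuousOn_mobility_term hT hε hu
  have cB := continuousOn_absorption_term hT hu
  have hschwarz (x : ℝ) := dt_dx_eq_dx_dt hT hU (mem_strip ht x)
  set U : ℝ × ℝ → ℝ := fun p => u p.1 p.2 with hUdef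
  have c1 := contDiffOn_dx hT hU
  have c2 := contDiffOn_dx hT c1
  have c3 := contDiffOn_dx hT c2
  have cW := contDiffOn_dt hT hU
  have hW (x : ℝ) : dt T U (t, x) = derivWithin (fun s => u s x) (Icc 0 T) t :=
    ((hasDerivWithinAt_dt hU ht x).derivWithin (uniqueDiffOn_Icc hT t ht)).symm
  have d0 (x : ℝ) : HasDerivAt (u t) (dx T U (t, x)) x := hasDerivAt_dx hU ht x
  have hF (x : ℝ) : HasDerivAt (fun y => fe ε (u t y) * dx T (dx T (dx T U)) (t, y))
      (-(dt T U (t, x) + u t x ^ lam)) x := by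
    have hd : DifferentiableAt ℝ (fun y => fe ε (u t y) * dx T (dx T (dx T U)) (t, y)) x :=
      ((differentiable_fe hε (u t x)).comp x (d0 x).differentiableAt).mul
        (hasDerivAt_dx c3 ht x).differentiableAt
    have heq := hu.2.2.2 t ht x
    rw [e3, ← hW] at heq
    exact hd.hasDerivAt.congr_deriv (by linarith)
  set G : ℝ → ℝ := fun y =>
    dx T (dx T U) (t, y) * (fe ε (u t y) * dx T (dx T (dx T U)) (t, y))
      + dx T U (t, y) * (dt T U (t, y) + u t y ^ lam) with hG
  have hGd (x : ℝ) : HasDerivAt G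
      (fe ε (u t x) * dx T (dx T (dx T U)) (t, x) ^ 2
        + lam * (u t x ^ (lam - 1) * dx T U (t, x) ^ 2)
        + dx T U (t, x) * dt T (dx T U) (t, x)) x := by
    have hp : HasDerivAt (fun y => u t y ^ lam) (dx T U (t, x) * lam * u t x ^ (lam - 1)) x :=
      (d0 x).rpow_const (Or.inl (hu.2.2.1 t x).ne')
    refine (((hasDerivAt_dx c2 ht x).mul (hF x)).add
      ((hasDerivAt_dx c1 ht x).mul ((hasDerivAt_dx cW ht x).add hp))).congr_deriv ?_
    rw [hschwarz x]
    simp only [Pi.add_apply]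
    ring
  have hint : IntervalIntegrable (fun x => fe ε (u t x) * dx T (dx T (dx T U)) (t, x) ^ 2
        + lam * (u t x ^ (lam - 1) * dx T U (t, x) ^ 2)
        + dx T U (t, x) * dt T (dx T U) (t, x)) volume 0 L := by
    have hc := (cA.add (continuousOn_const (c := lam) |>.mul cB)).add
      (c1.continuousOn.mul (contDiffOn_dt hT c1).continuousOn)
    exact (hc.comp_continuous (f := fun x : ℝ => (t, x)) (by fun_prop)
      (fun x => mem_strip ht x)).intervalIntegrable _ _
  rw [intervalIntegral.integral_eq_sub_of_hasDerivAt (fun x _ => hGd x) hint]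
  -- All factors of `G` take the same values at `0` and `L`.
  have p0 := hu.2.1 t
  have p1 := deriv_periodic p0
  have p2 := deriv_periodic p1
  have p3 := deriv_periodic p2
  have e3' : deriv (deriv (deriv (u t))) = fun x => dx T (dx T (dx T U)) (t, x) := by
    rw [← e3, iteratedDeriv_succ, iteratedDeriv_succ, iteratedDeriv_one]
  rw [e3'] at p3
  rw [e2] at p2
  rw [e1] at p1
  have pW : dt T U (t, 0 + L) = dt T U (t, 0) := by
    rw [hW, hW]
    simp only [hu.2.1]
  have q0 := p0 0
  have q1 := p1 0
  have q2 := p2 0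
  have q3 := p3 0
  simp only [zero_add] at q0 q1 q2 q3 pW
  simp only [hG, q0, q1, q2, q3, pW, sub_self]

end Solution

/-- Energy identity for regularized solutions; in particular the Dirichlet energy
`t ↦ ∫₀^L u_x(t,x)² dx` is nonincreasing. -/
theorem regularized_energy_identity
    (L T lam ε : ℝ) (hL : 0 < L) (hT : 0 < T) (hlam : 1 ≤ lam) (hε : 0 < ε)
    (u : ℝ → ℝ → ℝ) (hu : IsRegSol L T lam ε u) :
    (∀ t ∈ Set.Icc (0 : ℝ) T,
      (1 / 2) * (∫ x in (0 : ℝ)..L, (deriv (u t) x) ^ 2)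
        + (∫ s in (0 : ℝ)..t, ∫ x in (0 : ℝ)..L,
            fe ε (u s x) * (iteratedDeriv 3 (u s) x) ^ 2)
        + lam * ∫ s in (0 : ℝ)..t, ∫ x in (0 : ℝ)..L,
            (u s x) ^ (lam - 1) * (deriv (u s) x) ^ 2
      = (1 / 2) * ∫ x in (0 : ℝ)..L, (deriv (u 0) x) ^ 2) ∧
    (∀ t₁ ∈ Set.Icc (0 : ℝ) T, ∀ t₂ ∈ Set.Icc (0 : ℝ) T, t₁ ≤ t₂ →
      (∫ x in (0 : ℝ)..L, (deriv (u t₂) x) ^ 2)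
        ≤ ∫ x in (0 : ℝ)..L, (deriv (u t₁) x) ^ 2) := by
  set U : ℝ × ℝ → ℝ := fun p => u p.1 p.2 with hUdef
  have hU : ContDiffOn ℝ (⊤ : ℕ∞) U (strip T) := hu.contDiffOn
  have c1 := contDiffOn_dx hT hU
  have cA := continuousOn_mobility_term hT hε hu
  have cB := continuousOn_absorption_term hT hu
  have cC : ContinuousOn (fun p => dx T U p * dt T (dx T U) p) (strip T) :=
    c1.continuousOn.mul (contDiffOn_dt hT c1).continuousOn
  have h0 : (0 : ℝ) ∈ Icc 0 T := ⟨le_rfl, hT.le⟩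
  have hslice {h : ℝ × ℝ → ℝ} (hh : ContinuousOn h (strip T)) {s : ℝ} (hs : s ∈ Icc 0 T) :
      IntervalIntegrable (fun x => h (s, x)) volume 0 L :=
    (hh.comp_continuous (f := fun x : ℝ => (s, x)) (by fun_prop)
      (fun x => mem_strip hs x)).intervalIntegrable _ _
  set A : ℝ → ℝ := fun s =>
    ∫ x in (0 : ℝ)..L, fe ε (u s x) * (iteratedDeriv 3 (u s) x) ^ 2 with hA
  set B : ℝ → ℝ := fun s =>
    ∫ x in (0 : ℝ)..L, (u s x) ^ (lam - 1) * (deriv (u s) x) ^ 2 with hB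
  have hAc : ContinuousOn A (Icc 0 T) := by
    refine (continuousOn_integral_strip (L := L) hT cA).congr fun s hs => ?_
    simp only [hA, iteratedDeriv_three_eq_dx hT hu hs]
  have hBc : ContinuousOn B (Icc 0 T) := by
    refine (continuousOn_integral_strip (L := L) hT cB).congr fun s hs => ?_
    simp only [hB, deriv_eq_dx hu hs]
  have hbal {s : ℝ} (hs : s ∈ Icc 0 T) :
      ∫ x in (0 : ℝ)..L, dx T U (s, x) * dt T (dx T U) (s, x) = -(A s + lam * B s) := by
    have h := integral_dissipation_eq_zero hT hε hu hs
    rw [intervalIntegral.integral_add ((hslice cA hs).add ((hslice cB hs).const_mul lam))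
      (hslice cC hs), intervalIntegral.integral_add (hslice cA hs) ((hslice cB hs).const_mul lam),
      intervalIntegral.integral_const_mul] at h
    simp only [hA, hB, iteratedDeriv_three_eq_dx hT hu hs, deriv_eq_dx hu hs]
    linarith
  have hii {f : ℝ → ℝ} (hf : ContinuousOn f (Icc 0 T)) {a b : ℝ} (ha : a ∈ Icc 0 T)
      (hb : b ∈ Icc 0 T) : IntervalIntegrable f volume a b :=
    (hf.mono (ordConnected_Icc.uIcc_subset ha hb)).intervalIntegrable
  have hid : ∀ t ∈ Icc (0 : ℝ) T,
      (1 / 2) * (∫ x in (0 : ℝ)..L, (deriv (u t) x) ^ 2)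
        + (∫ s in (0 : ℝ)..t, A s) + lam * (∫ s in (0 : ℝ)..t, B s)
      = (1 / 2) * ∫ x in (0 : ℝ)..L, (deriv (u 0) x) ^ 2 := by
    intro t ht
    have h := integral_sq_sub_integral_sq (L := L) hT ht c1
    rw [intervalIntegral.integral_congr (g := fun s => -(A s + lam * B s))
      (fun s hs => hbal (ordConnected_Icc.uIcc_subset h0 ht hs)),
      intervalIntegral.integral_neg, intervalIntegral.integral_add (hii hAc h0 ht)
        ((hii hBc h0 ht).const_mul lam), intervalIntegral.integral_const_mul] at h
    rw [deriv_eq_dx hu ht, deriv_eq_dx hu h0]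
    linarith
  refine ⟨hid, fun t₁ h₁ t₂ h₂ h12 => ?_⟩
  have i1 := hid t₁ h₁
  have i2 := hid t₂ h₂
  rw [← intervalIntegral.integral_add_adjacent_intervals (hii hAc h0 h₁) (hii hAc h₁ h₂),
    ← intervalIntegral.integral_add_adjacent_intervals (hii hBc h0 h₁) (hii hBc h₁ h₂)] at i2
  have nA : 0 ≤ ∫ s in t₁..t₂, A s :=
    intervalIntegral.integral_nonneg h12 fun s _ =>
      intervalIntegral.integral_nonneg hL.le fun x _ =>
        mul_nonneg (fe_nonneg hε _) (sq_nonneg _)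
  have nB : 0 ≤ lam * ∫ s in t₁..t₂, B s :=
    mul_nonneg (by linarith) <| intervalIntegral.integral_nonneg h12 fun s _ =>
      intervalIntegral.integral_nonneg hL.le fun x _ =>
        mul_nonneg (Real.rpow_nonneg (hu.2.2.1 s x).le _) (sq_nonneg _)
  linarith

end
end

section
/- There exists a constant C > 0, independent of ε, u and v, such that for every ε ∈ (0,1] and all smooth L-periodic functions u, v, writing w = u − v: 2 ∫₀^L (A^ε w)(x) w(x) dx + 2 ∫₀^L (A^ε w)'(x) w'(x) dx + Σ_{k∈ℤ} λ_k² ∫₀^L [ ((Ψ_k w)'(x))² + ((Ψ_k w)''(x))² ] dx + Σ_{k∈ℤ} γ_k² ∫₀^L [ (Ψ_k(x)(f(u(x)) − f(v(x))))² + ((Ψ_k (f(u) − f(v)))'(x))² ] dx ≤ C (1 + ‖v‖_{2,2}²) ‖w‖_{1,2}² − 2ε ‖w‖_{2,2}². -/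
/-!
Write `w = u - v` and `p = Ψ_k`. Since `A^ε w` is a `C¹` periodic function, integration by parts
turns the two drift integrals into `2 ∫ (A^ε w) (w - w'')`. The viscous part of this is
`-2ε (‖w'‖₂² + ‖w''‖₂²)`, which equals `-2ε ‖w‖_{2,2}²` up to `2ε ‖w‖₂²` (`drift_estimate`).

For each mode, the transport part and the gradient noise combine to the integral of
`∂(p ∂(p w)) (w - w'') + (pw)'² + (pw)''²`. The terms `p² w''²` cancel, the terms linear in `w''`
are total derivatives up to lower order, and what remains is a quadratic form in `(w, w')` with
coefficients `p⁽ⁱ⁾ p⁽ʲ⁾`, `i + j ≤ 4` (`integral_mode_le`). These are bounded by `2 / L` uniformly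
in `k` by the normalization of `Ψ_k` (`abs_psiD_mul_le`), so the modes can be summed (`series_le`).

The Lipschitz noise is controlled through
`(f(u) - f(v))' = f'(u) w' + (f'(u) - f'(v)) v'`: the last term is at most `K |w| |v'|`, and
`∫ w² v'²` is bounded by `‖w‖_{1,2}² ‖v‖_{2,2}²` by the embedding `H¹ ⊆ L^∞` (`sq_le_energy`,
`lipschitz_mode_le`).
-/

open MeasureTheory
noncomputable section

/-- The normalizing constants `c_k = sqrt(2 / (L (1 + (2πk/L)² + (2πk/L)⁴)))`. -/
def cL (L : ℝ) (k : ℤ) : ℝ :=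
  Real.sqrt (2 / (L * (1 + (2 * Real.pi * (k : ℝ) / L) ^ 2
    + (2 * Real.pi * (k : ℝ) / L) ^ 4)))

/-- The trigonometric basis functions `Ψ_k` on the torus `𝕋_L`. -/
def psi (L : ℝ) (k : ℤ) : ℝ → ℝ := fun x =>
  if 0 < k then cL L k * Real.cos (2 * Real.pi * (k : ℝ) * x / L)
  else if k = 0 then cL L 0 / Real.sqrt 2
  else cL L k * Real.sin (2 * Real.pi * (k : ℝ) * x / L)

/-- `‖u‖₂²  = ∫₀^L u²`. -/
def norm2sq (L : ℝ) (u : ℝ → ℝ) : ℝ := ∫ x in (0 : ℝ)..L, (u x) ^ 2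

/-- `‖u‖_{1,2}² = ∫₀^L (u² + u'²)`. -/
def norm12sq (L : ℝ) (u : ℝ → ℝ) : ℝ :=
  ∫ x in (0 : ℝ)..L, ((u x) ^ 2 + (deriv u x) ^ 2)

/-- `‖u‖_{2,2}² = ∫₀^L (u² + u'² + u''²)`. -/
def norm22sq (L : ℝ) (u : ℝ → ℝ) : ℝ :=
  ∫ x in (0 : ℝ)..L, ((u x) ^ 2 + (deriv u x) ^ 2 + (deriv (deriv u) x) ^ 2)

/-- The operator `A^ε u = (1/2) Σ_k λ_k² ∂_x(Ψ_k ∂_x(Ψ_k u)) + ε ∂_x² u`. -/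
def Aop (L : ℝ) (lam : ℤ → ℝ) (ε : ℝ) (u : ℝ → ℝ) : ℝ → ℝ := fun x =>
  (1 / 2) * (∑' k : ℤ,
      (lam k) ^ 2 * deriv (fun y => psi L k y * deriv (fun z => psi L k z * u z) y) x)
    + ε * deriv (deriv u) x

/-! ### Periodic jets and the basis functions -/

/-- A sequence `P 0, P 1, P 2, …` of `L`-periodic functions in which each entry is the derivative
of the previous one, so that `P n` is the `n`-th derivative of `P 0`. -/
structure IsPeriodicJet (L : ℝ) (P : ℕ → ℝ → ℝ) : Prop where
  hasDerivAt : ∀ n x, HasDerivAt (P n) (P (n + 1) x) x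
  periodic : ∀ n x, P n (x + L) = P n x

namespace IsPeriodicJet

variable {L : ℝ} {P : ℕ → ℝ → ℝ}

lemma continuous (h : IsPeriodicJet L P) (n : ℕ) : Continuous (P n) :=
  continuous_iff_continuousAt.2 fun x => (h.hasDerivAt n x).continuousAt

lemma endpoints (h : IsPeriodicJet L P) (n : ℕ) : P n L = P n 0 := by
  simpa using h.periodic n 0

/-- Boundedness over a full period gives one bound for the first four entries on all of `ℝ`. -/
lemma exists_bound (h : IsPeriodicJet L P) (hL : 0 < L) :
    ∃ M, 0 ≤ M ∧ ∀ n ≤ 3, ∀ x, |P n x| ≤ M := by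
  have key : ∀ n, ∃ M, ∀ x, |P n x| ≤ M := by
    intro n
    have hb := Function.Periodic.isBounded_of_continuous (f := P n) (c := L)
      (h.periodic n) hL.ne' (h.continuous n)
    obtain ⟨M, hM⟩ := hb.exists_norm_le
    exact ⟨M, fun x => by simpa using hM (P n x) ⟨x, rfl⟩⟩
  choose M hM using key
  have h0 : ∀ n, 0 ≤ M n := fun n => (abs_nonneg _).trans (hM n 0)
  refine ⟨M 0 + M 1 + M 2 + M 3, by linarith [h0 0, h0 1, h0 2, h0 3], fun n hn x => ?_⟩
  interval_cases n
  all_goals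
    linarith [h0 0, h0 1, h0 2, h0 3, hM 0 x, hM 1 x, hM 2 x, hM 3 x]

end IsPeriodicJet

/-- The iterated derivatives of a smooth periodic function form a periodic jet. -/
lemma isPeriodicJet_of_contDiff {L : ℝ} {w : ℝ → ℝ} (hw : ContDiff ℝ (⊤ : ℕ∞) w)
    (hper : ∀ x, w (x + L) = w x) : IsPeriodicJet L (fun n => deriv^[n] w) where
  hasDerivAt n x := by
    have hd : Differentiable ℝ (iteratedDeriv n w) :=
      hw.differentiable_iteratedDeriv n (by exact_mod_cast WithTop.coe_lt_top n)
    rw [iteratedDeriv_eq_iterate] at hd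
    simpa only [Function.iterate_succ_apply'] using (hd x).hasDerivAt
  periodic n x := by
    have h := iteratedDeriv_comp_add_const n w L
    have e : (fun z => w (z + L)) = w := funext hper
    rw [e, iteratedDeriv_eq_iterate] at h
    exact (congrFun h x).symm

/-- The iterated derivatives of `Ψ_k`, generated by `Ψ_k'' = -(2πk/L)² Ψ_k`. -/
def psiD (L : ℝ) (k : ℤ) : ℕ → ℝ → ℝ
  | 0 => psi L k
  | 1 => fun x =>
      if 0 < k then -(cL L k * (2 * Real.pi * k / L) * Real.sin (2 * Real.pi * (k : ℝ) * x / L))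
      else if k = 0 then 0
      else cL L k * (2 * Real.pi * k / L) * Real.cos (2 * Real.pi * (k : ℝ) * x / L)
  | n + 2 => fun x => -(2 * Real.pi * k / L) ^ 2 * psiD L k n x

lemma psiD_isPeriodicJet {L : ℝ} (hL : 0 < L) (k : ℤ) : IsPeriodicJet L (psiD L k) := by
  have hlin : ∀ x : ℝ, HasDerivAt (fun y : ℝ => 2 * Real.pi * (k : ℝ) * y / L)
      (2 * Real.pi * k / L) x := fun x => by
    simpa using ((hasDerivAt_id x).const_mul (2 * Real.pi * (k : ℝ))).div_const L
  have harg : ∀ x : ℝ, 2 * Real.pi * (k : ℝ) * (x + L) / L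
      = 2 * Real.pi * (k : ℝ) * x / L + k * (2 * Real.pi) := fun x => by
    field_simp
  constructor
  · intro n
    induction n using Nat.twoStepInduction with
    | zero =>
      intro x
      simp only [psiD]
      unfold psi
      split_ifs with h1 h2
      · exact (((hlin x).cos).const_mul (cL L k)).congr_deriv (by ring)
      · exact hasDerivAt_const x _
      · exact (((hlin x).sin).const_mul (cL L k)).congr_deriv (by ring)
    | one =>
      intro x
      simp only [psiD]
      unfold psi
      split_ifs with h1 h2
      · exact (((hlin x).sin).const_mul (cL L k * (2 * Real.pi * k / L))).neg.congr_deriv (by ring)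
      · subst h2
        exact (hasDerivAt_const x (0 : ℝ)).congr_deriv (by simp)
      · exact (((hlin x).cos).const_mul (cL L k * (2 * Real.pi * k / L))).congr_deriv (by ring)
    | more n ih _ =>
      intro x
      exact (ih x).const_mul _
  · intro n
    induction n using Nat.twoStepInduction with
    | zero =>
      intro x
      simp only [psiD, psi, harg, Real.cos_add_int_mul_two_pi, Real.sin_add_int_mul_two_pi]
    | one =>
      intro x
      simp only [psiD, harg, Real.cos_add_int_mul_two_pi, Real.sin_add_int_mul_two_pi]
    | more n ih _ =>
      intro x
      simp only [psiD, ih]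

lemma cL_nonneg (L : ℝ) (k : ℤ) : 0 ≤ cL L k := Real.sqrt_nonneg _

lemma abs_psiD_le (L : ℝ) (k : ℤ) (n : ℕ) :
    ∀ x, |psiD L k n x| ≤ cL L k * |2 * Real.pi * k / L| ^ n := by
  have hc := cL_nonneg L k
  induction n using Nat.twoStepInduction with
  | zero =>
    intro x
    simp only [psiD, psi, pow_zero, mul_one]
    split_ifs with h1 h2
    · rw [abs_mul, abs_of_nonneg hc]
      exact mul_le_of_le_one_right hc (Real.abs_cos_le_one _)
    · subst h2
      rw [abs_of_nonneg (by positivity)]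
      exact div_le_self hc (Real.one_le_sqrt.2 (by norm_num))
    · rw [abs_mul, abs_of_nonneg hc]
      exact mul_le_of_le_one_right hc (Real.abs_sin_le_one _)
  | one =>
    intro x
    simp only [psiD, pow_one]
    split_ifs with h1 h2
    · rw [abs_neg, abs_mul, abs_mul, abs_of_nonneg hc]
      exact mul_le_of_le_one_right (by positivity) (Real.abs_sin_le_one _)
    · simpa using by positivity
    · rw [abs_mul, abs_mul, abs_of_nonneg hc]
      exact mul_le_of_le_one_right (by positivity) (Real.abs_cos_le_one _)
  | more n ih _ =>
    intro x
    simp only [psiD]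
    rw [abs_mul, abs_neg, abs_pow, pow_add, ← mul_assoc, mul_comm]
    exact mul_le_mul_of_nonneg_right (ih x) (by positivity)

/-- The normalization of `Ψ_k` in `H²` bounds products of derivatives of total order at most four,
uniformly in `k`. -/
lemma abs_psiD_mul_le {L : ℝ} (hL : 0 < L) (k : ℤ) (i j : ℕ) (hij : i + j ≤ 4) (x : ℝ) :
    |psiD L k i x * psiD L k j x| ≤ 2 / L := by
  set q : ℝ := |2 * Real.pi * k / L| with hq
  have hq0 : 0 ≤ q := abs_nonneg _
  have hc := cL_nonneg L k
  have hden : 0 < 1 + q ^ 2 + q ^ 4 := by positivity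
  have hcsq : cL L k ^ 2 = 2 / (L * (1 + q ^ 2 + q ^ 4)) := by
    have e4 : q ^ 4 = (2 * Real.pi * k / L) ^ 4 := by
      rw [hq]; exact Even.pow_abs (by decide) _
    unfold cL
    rw [Real.sq_sqrt (by positivity), hq, sq_abs, ← hq, e4]
  have hpow : q ^ (i + j) ≤ 1 + q ^ 2 + q ^ 4 := by
    interval_cases (i + j)
    · nlinarith [sq_nonneg q, sq_nonneg (q ^ 2)]
    · nlinarith [sq_nonneg (q - 1), sq_nonneg (q ^ 2)]
    · nlinarith [sq_nonneg (q ^ 2)]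
    · nlinarith [sq_nonneg (q * (q - 1)), sq_nonneg (q ^ 2)]
    · nlinarith [sq_nonneg q]
  calc |psiD L k i x * psiD L k j x| = |psiD L k i x| * |psiD L k j x| := abs_mul _ _
    _ ≤ (cL L k * q ^ i) * (cL L k * q ^ j) :=
        mul_le_mul (abs_psiD_le L k i x) (abs_psiD_le L k j x) (abs_nonneg _) (by positivity)
    _ = cL L k ^ 2 * q ^ (i + j) := by ring
    _ ≤ cL L k ^ 2 * (1 + q ^ 2 + q ^ 4) := mul_le_mul_of_nonneg_left hpow (by positivity)
    _ = 2 / L := by rw [hcsq]; field_simp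

/-! ### The second-order operator attached to one basis function -/

/-- `∂(p ∂(p w))`, expanded in the jets `P` of `p` and `W` of `w`. -/
def secondOrder (P W : ℕ → ℝ → ℝ) (x : ℝ) : ℝ :=
  (P 1 x * P 1 x + P 0 x * P 2 x) * W 0 x + 3 * (P 0 x * P 1 x) * W 1 x
    + (P 0 x * P 0 x) * W 2 x

/-- The derivative of `secondOrder P W`. -/
def secondOrderD (P W : ℕ → ℝ → ℝ) (x : ℝ) : ℝ :=
  (3 * (P 1 x * P 2 x) + P 0 x * P 3 x) * W 0 x + 4 * (P 1 x * P 1 x + P 0 x * P 2 x) * W 1 x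
    + 5 * (P 0 x * P 1 x) * W 2 x + (P 0 x * P 0 x) * W 3 x

section OneMode

variable {L B : ℝ} {P W : ℕ → ℝ → ℝ}

lemma hasDerivAt_mul_jet (hP : IsPeriodicJet L P) (hW : IsPeriodicJet L W) (x : ℝ) :
    HasDerivAt (fun z => P 0 z * W 0 z) (P 1 x * W 0 x + P 0 x * W 1 x) x :=
  (hP.hasDerivAt 0 x).mul (hW.hasDerivAt 0 x)

lemma deriv_mul_jet (hP : IsPeriodicJet L P) (hW : IsPeriodicJet L W) :
    deriv (fun z => P 0 z * W 0 z) = fun x => P 1 x * W 0 x + P 0 x * W 1 x :=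
  funext fun x => (hasDerivAt_mul_jet hP hW x).deriv

lemma deriv_deriv_mul_jet (hP : IsPeriodicJet L P) (hW : IsPeriodicJet L W) :
    deriv (deriv (fun z => P 0 z * W 0 z))
      = fun x => P 2 x * W 0 x + 2 * (P 1 x * W 1 x) + P 0 x * W 2 x := by
  rw [deriv_mul_jet hP hW]
  funext x
  exact (((hP.hasDerivAt 1 x).mul (hW.hasDerivAt 0 x)).add
    ((hP.hasDerivAt 0 x).mul (hW.hasDerivAt 1 x))).congr_deriv (by ring) |>.deriv

lemma deriv_mul_deriv_mul_jet (hP : IsPeriodicJet L P) (hW : IsPeriodicJet L W) (x : ℝ) :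
    deriv (fun y => P 0 y * deriv (fun z => P 0 z * W 0 z) y) x = secondOrder P W x := by
  rw [deriv_mul_jet hP hW]
  refine (((hP.hasDerivAt 0 x).mul (((hP.hasDerivAt 1 x).mul (hW.hasDerivAt 0 x)).add
    ((hP.hasDerivAt 0 x).mul (hW.hasDerivAt 1 x)))).congr_deriv ?_).deriv
  simp only [secondOrder, Pi.add_apply, Pi.mul_apply]
  ring

lemma hasDerivAt_secondOrder (hP : IsPeriodicJet L P) (hW : IsPeriodicJet L W) (x : ℝ) :
    HasDerivAt (secondOrder P W) (secondOrderD P W x) x := by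
  have p0 := hP.hasDerivAt 0 x
  have p1 := hP.hasDerivAt 1 x
  have p2 := hP.hasDerivAt 2 x
  refine ((((((p1.mul p1).add (p0.mul p2)).mul (hW.hasDerivAt 0 x)).add
    (((p0.mul p1).const_mul 3).mul (hW.hasDerivAt 1 x))).add
    ((p0.mul p0).mul (hW.hasDerivAt 2 x)))).congr_deriv ?_
  simp only [secondOrderD, Pi.add_apply, Pi.mul_apply]
  ring

lemma continuous_secondOrder (hP : IsPeriodicJet L P) (hW : IsPeriodicJet L W) :
    Continuous (secondOrder P W) :=
  continuous_iff_continuousAt.2 fun x => (hasDerivAt_secondOrder hP hW x).continuousAt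

lemma continuous_secondOrderD (hP : IsPeriodicJet L P) (hW : IsPeriodicJet L W) :
    Continuous (secondOrderD P W) := by
  have hp := hP.continuous
  have hw := hW.continuous
  unfold secondOrderD
  fun_prop

lemma abs_mul_le_of_le {a b B M : ℝ} (ha : |a| ≤ B) (hb : |b| ≤ M) : |a * b| ≤ B * M := by
  rw [abs_mul]
  exact mul_le_mul ha hb (abs_nonneg _) ((abs_nonneg _).trans ha)

lemma abs_secondOrder_le (hB : ∀ i j, i + j ≤ 4 → ∀ x, |P i x * P j x| ≤ B) {M : ℝ}
    (hM : ∀ n ≤ 3, ∀ x, |W n x| ≤ M) (x : ℝ) : |secondOrder P W x| ≤ 6 * B * M := by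
  have h1 := abs_le.1 (abs_mul_le_of_le (hB 1 1 (by norm_num) x) (hM 0 (by norm_num) x))
  have h2 := abs_le.1 (abs_mul_le_of_le (hB 0 2 (by norm_num) x) (hM 0 (by norm_num) x))
  have h3 := abs_le.1 (abs_mul_le_of_le (hB 0 1 (by norm_num) x) (hM 1 (by norm_num) x))
  have h4 := abs_le.1 (abs_mul_le_of_le (hB 0 0 (by norm_num) x) (hM 2 (by norm_num) x))
  unfold secondOrder
  rw [abs_le]
  constructor <;> linarith

lemma abs_secondOrderD_le (hB : ∀ i j, i + j ≤ 4 → ∀ x, |P i x * P j x| ≤ B) {M : ℝ}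
    (hM : ∀ n ≤ 3, ∀ x, |W n x| ≤ M) (x : ℝ) : |secondOrderD P W x| ≤ 18 * B * M := by
  have h1 := abs_le.1 (abs_mul_le_of_le (hB 1 2 (by norm_num) x) (hM 0 (by norm_num) x))
  have h2 := abs_le.1 (abs_mul_le_of_le (hB 0 3 (by norm_num) x) (hM 0 (by norm_num) x))
  have h3 := abs_le.1 (abs_mul_le_of_le (hB 1 1 (by norm_num) x) (hM 1 (by norm_num) x))
  have h4 := abs_le.1 (abs_mul_le_of_le (hB 0 2 (by norm_num) x) (hM 1 (by norm_num) x))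
  have h5 := abs_le.1 (abs_mul_le_of_le (hB 0 1 (by norm_num) x) (hM 2 (by norm_num) x))
  have h6 := abs_le.1 (abs_mul_le_of_le (hB 0 0 (by norm_num) x) (hM 3 (by norm_num) x))
  unfold secondOrderD
  rw [abs_le]
  constructor <;> linarith

/-- The integral of a continuous derivative vanishes when the primitive has equal endpoint
values. -/
lemma integral_eq_zero_of_endpoints {G g : ℝ → ℝ} (hG : ∀ x, HasDerivAt G (g x) x)
    (hg : Continuous g) (h : G L = G 0) : ∫ x in (0 : ℝ)..L, g x = 0 := by
  rw [intervalIntegral.integral_eq_sub_of_hasDerivAt (fun x _ => hG x)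
    (hg.intervalIntegrable _ _), h, sub_self]

/-- The quantity `(pw)'² + (pw)''²`, in terms of jets. -/
def noiseDensity (P W : ℕ → ℝ → ℝ) (x : ℝ) : ℝ :=
  (P 1 x * W 0 x + P 0 x * W 1 x) ^ 2
    + (P 2 x * W 0 x + 2 * (P 1 x * W 1 x) + P 0 x * W 2 x) ^ 2

lemma continuous_noiseDensity (hP : IsPeriodicJet L P) (hW : IsPeriodicJet L W) :
    Continuous (noiseDensity P W) := by
  have hp := hP.continuous
  have hw := hW.continuous
  unfold noiseDensity
  fun_prop

lemma noiseDensity_nonneg (x : ℝ) : 0 ≤ noiseDensity P W x := by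
  unfold noiseDensity
  positivity

lemma continuous_energy (hW : IsPeriodicJet L W) :
    Continuous fun x => W 0 x ^ 2 + W 1 x ^ 2 := by
  have hw := hW.continuous
  fun_prop

/-- The cancellation behind the estimate: modulo a total derivative, all terms of
`∂(p ∂(p w)) (w - w'') + (pw)'² + (pw)''²` that contain `w''` drop out, and what is left is a
quadratic form in `(w, w')` whose coefficients are products of derivatives of `p`. -/
lemma integral_mode_le (hL : 0 < L) (hP : IsPeriodicJet L P) (hW : IsPeriodicJet L W)
    (hB : ∀ i j, i + j ≤ 4 → ∀ x, |P i x * P j x| ≤ B) :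
    (∫ x in (0 : ℝ)..L, secondOrder P W x * (W 0 x - W 2 x))
        + (∫ x in (0 : ℝ)..L, noiseDensity P W x)
      ≤ 10 * B * ∫ x in (0 : ℝ)..L, (W 0 x ^ 2 + W 1 x ^ 2) := by
  have hp := hP.continuous
  have hw := hW.continuous
  have hT := continuous_secondOrder hP hW
  have hN := continuous_noiseDensity hP hW
  -- `G` collects the boundary terms of all the integrations by parts.
  let G : ℝ → ℝ := fun x => P 0 x * (P 1 x * W 0 x + P 0 x * W 1 x) * W 0 x
    + (P 0 x * P 2 x - P 1 x * P 1 x) * (W 0 x * W 1 x)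
    + 1 / 2 * (P 0 x * P 1 x) * (W 1 x * W 1 x)
  let R : ℝ → ℝ := fun x => (P 1 x * P 1 x + P 2 x * P 2 x) * W 0 x ^ 2
    + (P 0 x * P 1 x + 5 * (P 1 x * P 2 x) - P 0 x * P 3 x) * (W 0 x * W 1 x)
    + (9 / 2 * (P 1 x * P 1 x) - 3 / 2 * (P 0 x * P 2 x)) * W 1 x ^ 2
  let g : ℝ → ℝ := fun x => secondOrder P W x * (W 0 x - W 2 x) + noiseDensity P W x - R x
  have hR : Continuous R := by fun_prop
  have hg : Continuous g := by fun_prop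
  have hG : ∀ x, HasDerivAt G (g x) x := by
    intro x
    have p0 := hP.hasDerivAt 0 x
    have p1 := hP.hasDerivAt 1 x
    have p2 := hP.hasDerivAt 2 x
    have w0 := hW.hasDerivAt 0 x
    have w1 := hW.hasDerivAt 1 x
    refine ((((p0.mul ((p1.mul w0).add (p0.mul w1))).mul w0).add
      (((p0.mul p2).sub (p1.mul p1)).mul (w0.mul w1))).add
      (((p0.mul p1).const_mul (1 / 2)).mul (w1.mul w1))).congr_deriv ?_
    simp only [g, R, secondOrder, noiseDensity, Pi.add_apply, Pi.mul_apply, Pi.sub_apply]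
    ring
  have h0 : ∫ x in (0 : ℝ)..L, g x = 0 :=
    integral_eq_zero_of_endpoints hG hg (by simp only [G, hP.endpoints, hW.endpoints])
  have hsplit : (∫ x in (0 : ℝ)..L, secondOrder P W x * (W 0 x - W 2 x))
        + (∫ x in (0 : ℝ)..L, noiseDensity P W x) = ∫ x in (0 : ℝ)..L, R x := by
    have e : ∫ x in (0 : ℝ)..L, g x
        = ((∫ x in (0 : ℝ)..L, secondOrder P W x * (W 0 x - W 2 x))
          + (∫ x in (0 : ℝ)..L, noiseDensity P W x)) - ∫ x in (0 : ℝ)..L, R x := by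
      rw [← intervalIntegral.integral_add, ← intervalIntegral.integral_sub]
      all_goals exact Continuous.intervalIntegrable (by fun_prop) _ _
    linarith
  rw [hsplit, ← intervalIntegral.integral_const_mul]
  refine intervalIntegral.integral_mono_on hL.le (hR.intervalIntegrable _ _)
    ((continuous_energy hW).const_mul _ |>.intervalIntegrable _ _) fun x _ => ?_
  have hww : |W 0 x * W 1 x| ≤ (W 0 x ^ 2 + W 1 x ^ 2) / 2 := by
    rw [abs_le]
    constructor <;> nlinarith [sq_nonneg (W 0 x + W 1 x), sq_nonneg (W 0 x - W 1 x)]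
  have hs0 : |W 0 x ^ 2| ≤ W 0 x ^ 2 := (abs_of_nonneg (sq_nonneg _)).le
  have hs1 : |W 1 x ^ 2| ≤ W 1 x ^ 2 := (abs_of_nonneg (sq_nonneg _)).le
  have hB0 : 0 ≤ B := (abs_nonneg _).trans (hB 0 0 (by norm_num) 0)
  have b1 := abs_le.1 (abs_mul_le_of_le (hB 1 1 (by norm_num) x) hs0)
  have b2 := abs_le.1 (abs_mul_le_of_le (hB 2 2 (by norm_num) x) hs0)
  have b3 := abs_le.1 (abs_mul_le_of_le (hB 0 1 (by norm_num) x) hww)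
  have b4 := abs_le.1 (abs_mul_le_of_le (hB 1 2 (by norm_num) x) hww)
  have b5 := abs_le.1 (abs_mul_le_of_le (hB 0 3 (by norm_num) x) hww)
  have b6 := abs_le.1 (abs_mul_le_of_le (hB 1 1 (by norm_num) x) hs1)
  have b7 := abs_le.1 (abs_mul_le_of_le (hB 0 2 (by norm_num) x) hs1)
  have n0 := mul_nonneg hB0 (sq_nonneg (W 0 x))
  have n1 := mul_nonneg hB0 (sq_nonneg (W 1 x))
  simp only [R]
  linarith

lemma noiseDensity_le (hB : ∀ i j, i + j ≤ 4 → ∀ x, |P i x * P j x| ≤ B) {M : ℝ}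
    (hM : ∀ n ≤ 3, ∀ x, |W n x| ≤ M) (x : ℝ) : noiseDensity P W x ≤ 26 * B * M ^ 2 := by
  have hsq : ∀ i ≤ 2, ∀ n ≤ 3, (P i x * W n x) ^ 2 ≤ B * M ^ 2 := by
    intro i hi n hn
    have h1 := (le_abs_self _).trans (hB i i (by omega) x)
    have h2 : W n x ^ 2 ≤ M ^ 2 := sq_le_sq.2 ((hM n hn x).trans (le_abs_self M))
    calc (P i x * W n x) ^ 2 = P i x * P i x * W n x ^ 2 := by ring
      _ ≤ B * M ^ 2 := mul_le_mul h1 h2 (sq_nonneg _) ((mul_self_nonneg _).trans h1)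
  have a1 := hsq 1 (by norm_num) 0 (by norm_num)
  have a2 := hsq 0 (by norm_num) 1 (by norm_num)
  have a3 := hsq 2 (by norm_num) 0 (by norm_num)
  have a4 := hsq 1 (by norm_num) 1 (by norm_num)
  have a5 := hsq 0 (by norm_num) 2 (by norm_num)
  have two : ∀ a b : ℝ, (a + b) ^ 2 ≤ 2 * a ^ 2 + 2 * b ^ 2 := fun a b => by
    linarith [sq_nonneg (a - b), sq_nonneg (a + b), add_sq a b, sub_sq a b]
  have h1 := two (P 1 x * W 0 x) (P 0 x * W 1 x)
  have h2 := two (P 2 x * W 0 x + 2 * (P 1 x * W 1 x)) (P 0 x * W 2 x)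
  have h3 := two (P 2 x * W 0 x) (2 * (P 1 x * W 1 x))
  rw [mul_pow 2 (P 1 x * W 1 x) 2] at h3
  unfold noiseDensity
  linarith

/-- The one-dimensional Sobolev embedding `H¹ ⊆ L^∞` on an interval of length `L`. -/
lemma sq_le_energy (hL : 0 < L) (hW : IsPeriodicJet L W) {x : ℝ} (hx : x ∈ Set.Icc 0 L) :
    W 0 x ^ 2 ≤ (1 / L + 1) * ∫ y in (0 : ℝ)..L, (W 0 y ^ 2 + W 1 y ^ 2) := by
  have hw := hW.continuous
  have hE := continuous_energy hW
  set N := ∫ y in (0 : ℝ)..L, (W 0 y ^ 2 + W 1 y ^ 2) with hN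
  have hpt : ∀ y ∈ Set.Icc 0 L, W 0 x ^ 2 ≤ W 0 y ^ 2 + N := by
    intro y hy
    have hd : ∀ z, HasDerivAt (fun z => W 0 z ^ 2) (2 * (W 0 z * W 1 z)) z := fun z =>
      ((hW.hasDerivAt 0 z).pow 2).congr_deriv (by simp; ring)
    have hftc := intervalIntegral.integral_eq_sub_of_hasDerivAt (a := y) (b := x)
      (fun z _ => hd z) (Continuous.intervalIntegrable (by fun_prop) _ _)
    have hle : |∫ z in y..x, 2 * (W 0 z * W 1 z)| ≤ N := by
      have h1 : |∫ z in y..x, 2 * (W 0 z * W 1 z)|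
          ≤ |∫ z in y..x, (W 0 z ^ 2 + W 1 z ^ 2)| := by
        have := intervalIntegral.norm_integral_le_abs_of_norm_le (μ := volume) (a := y) (b := x)
          (f := fun z => 2 * (W 0 z * W 1 z)) (g := fun z => W 0 z ^ 2 + W 1 z ^ 2)
          (Filter.Eventually.of_forall fun z => by
            rw [Real.norm_eq_abs, abs_le]
            constructor <;> nlinarith [sq_nonneg (W 0 z + W 1 z), sq_nonneg (W 0 z - W 1 z)])
          (hE.intervalIntegrable _ _)
        simpa using this
      refine h1.trans ?_
      have h2 := intervalIntegral.abs_integral_mono_interval (μ := volume) (a := y) (b := x)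
        (c := 0) (d := L) (f := fun z => W 0 z ^ 2 + W 1 z ^ 2)
        (by
          rw [Set.uIoc_of_le hL.le]
          intro z hz
          rcases Set.mem_uIoc.1 hz with h | h
          · exact ⟨hy.1.trans_lt h.1, h.2.trans hx.2⟩
          · exact ⟨hx.1.trans_lt h.1, h.2.trans hy.2⟩)
        (Filter.Eventually.of_forall fun z => by positivity) (hE.intervalIntegrable _ _)
      refine h2.trans (abs_of_nonneg ?_).le
      exact intervalIntegral.integral_nonneg hL.le fun z _ => by positivity
    have := (abs_le.1 hle).2
    linarith
  have hmono := intervalIntegral.integral_mono_on hL.le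
    (intervalIntegrable_const (c := W 0 x ^ 2) (μ := volume))
    (Continuous.intervalIntegrable (by fun_prop) 0 L) hpt
  have hmono2 : ∫ y in (0 : ℝ)..L, W 0 y ^ 2 ≤ N :=
    intervalIntegral.integral_mono_on hL.le (Continuous.intervalIntegrable (by fun_prop) _ _)
      (hE.intervalIntegrable _ _) fun y _ => by nlinarith [sq_nonneg (W 1 y)]
  rw [intervalIntegral.integral_add (Continuous.intervalIntegrable (by fun_prop) _ _)
    intervalIntegrable_const] at hmono
  simp only [intervalIntegral.integral_const, sub_zero, smul_eq_mul] at hmono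
  have hfin : L * W 0 x ^ 2 ≤ L * ((1 / L + 1) * N) := by
    have : L * ((1 / L + 1) * N) = N + L * N := by field_simp
    linarith
  exact le_of_mul_le_mul_left hfin hL

end OneMode

/-! ### Summation over the modes -/

section Series

variable {L : ℝ} {a : ℤ → ℝ} {W : ℕ → ℝ → ℝ}

/-- The second-order part of `2 A^ε w`: the series `Σ_k a_k ∂(Ψ_k ∂(Ψ_k w))`. -/
def driftSeries (L : ℝ) (a : ℤ → ℝ) (W : ℕ → ℝ → ℝ) (x : ℝ) : ℝ :=
  ∑' k : ℤ, a k * secondOrder (psiD L k) W x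

/-- The termwise derivative of `driftSeries`. -/
def driftSeriesD (L : ℝ) (a : ℤ → ℝ) (W : ℕ → ℝ → ℝ) (x : ℝ) : ℝ :=
  ∑' k : ℤ, a k * secondOrderD (psiD L k) W x

lemma norm_mul_le_of_nonneg {c y D : ℝ} (hc : 0 ≤ c) (hy : |y| ≤ D) : ‖c * y‖ ≤ c * D := by
  rw [Real.norm_eq_abs, abs_mul, abs_of_nonneg hc]
  exact mul_le_mul_of_nonneg_left hy hc

lemma summable_driftSeries (hL : 0 < L) (ha : ∀ k, 0 ≤ a k) (hs : Summable a)
    (hW : IsPeriodicJet L W) (x : ℝ) :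
    Summable fun k : ℤ => a k * secondOrder (psiD L k) W x := by
  obtain ⟨M, -, hM⟩ := hW.exists_bound hL
  exact Summable.of_norm_bounded (hs.mul_right (6 * (2 / L) * M)) fun k =>
    norm_mul_le_of_nonneg (ha k) (abs_secondOrder_le (abs_psiD_mul_le hL k) hM x)

lemma hasDerivAt_driftSeries (hL : 0 < L) (ha : ∀ k, 0 ≤ a k) (hs : Summable a)
    (hW : IsPeriodicJet L W) (x : ℝ) :
    HasDerivAt (driftSeries L a W) (driftSeriesD L a W x) x := by
  obtain ⟨M, -, hM⟩ := hW.exists_bound hL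
  exact hasDerivAt_tsum (hs.mul_right (18 * (2 / L) * M))
    (fun k y => (hasDerivAt_secondOrder (psiD_isPeriodicJet hL k) hW y).const_mul (a k))
    (fun k y => norm_mul_le_of_nonneg (ha k) (abs_secondOrderD_le (abs_psiD_mul_le hL k) hM y))
    (summable_driftSeries hL ha hs hW 0) x

lemma continuous_driftSeries (hL : 0 < L) (ha : ∀ k, 0 ≤ a k) (hs : Summable a)
    (hW : IsPeriodicJet L W) : Continuous (driftSeries L a W) :=
  continuous_iff_continuousAt.2 fun x => (hasDerivAt_driftSeries hL ha hs hW x).continuousAt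

lemma continuous_driftSeriesD (hL : 0 < L) (ha : ∀ k, 0 ≤ a k) (hs : Summable a)
    (hW : IsPeriodicJet L W) : Continuous (driftSeriesD L a W) := by
  obtain ⟨M, -, hM⟩ := hW.exists_bound hL
  exact continuous_tsum
    (fun k => (continuous_secondOrderD (psiD_isPeriodicJet hL k) hW).const_mul (a k))
    (hs.mul_right (18 * (2 / L) * M))
    (fun k y => norm_mul_le_of_nonneg (ha k) (abs_secondOrderD_le (abs_psiD_mul_le hL k) hM y))

lemma driftSeries_endpoints (hL : 0 < L) (hW : IsPeriodicJet L W) :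
    driftSeries L a W L = driftSeries L a W 0 := by
  simp only [driftSeries, secondOrder, (psiD_isPeriodicJet hL _).endpoints, hW.endpoints]

lemma hasSum_integral_driftSeries (hL : 0 < L) (ha : ∀ k, 0 ≤ a k) (hs : Summable a)
    (hW : IsPeriodicJet L W) :
    HasSum (fun k : ℤ => a k * ∫ x in (0 : ℝ)..L, secondOrder (psiD L k) W x * (W 0 x - W 2 x))
      (∫ x in (0 : ℝ)..L, driftSeries L a W x * (W 0 x - W 2 x)) := by
  obtain ⟨M, hM0, hM⟩ := hW.exists_bound hL
  have hw := hW.continuous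
  simp_rw [← intervalIntegral.integral_const_mul]
  refine intervalIntegral.hasSum_integral_of_dominated_convergence
    (fun k _ => a k * (6 * (2 / L) * M * (M + M))) ?_ ?_ ?_ ?_ ?_
  · intro k
    have hT := continuous_secondOrder (psiD_isPeriodicJet hL k) hW
    exact Continuous.aestronglyMeasurable (by fun_prop)
  · intro k
    refine Filter.Eventually.of_forall fun x _ => norm_mul_le_of_nonneg (ha k) ?_
    refine abs_mul_le_of_le (abs_secondOrder_le (abs_psiD_mul_le hL k) hM x) ?_
    exact (abs_sub _ _).trans (add_le_add (hM 0 (by norm_num) x) (hM 2 (by norm_num) x))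
  · exact Filter.Eventually.of_forall fun x _ => hs.mul_right _
  · exact intervalIntegrable_const
  · refine Filter.Eventually.of_forall fun x _ => ?_
    simpa only [driftSeries, mul_assoc] using
      (summable_driftSeries hL ha hs hW x).hasSum.mul_right (W 0 x - W 2 x)

lemma summable_noise (hL : 0 < L) (ha : ∀ k, 0 ≤ a k) (hs : Summable a)
    (hW : IsPeriodicJet L W) :
    Summable fun k : ℤ => a k * ∫ x in (0 : ℝ)..L, noiseDensity (psiD L k) W x := by
  obtain ⟨M, hM0, hM⟩ := hW.exists_bound hL
  refine Summable.of_nonneg_of_le (fun k => mul_nonneg (ha k) ?_)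
    (fun k => mul_le_mul_of_nonneg_left ?_ (ha k)) (hs.mul_right (26 * (2 / L) * M ^ 2 * L))
  · exact intervalIntegral.integral_nonneg hL.le fun x _ => noiseDensity_nonneg x
  · calc ∫ x in (0 : ℝ)..L, noiseDensity (psiD L k) W x
        ≤ ∫ _ in (0 : ℝ)..L, 26 * (2 / L) * M ^ 2 :=
          intervalIntegral.integral_mono_on hL.le
            ((continuous_noiseDensity (psiD_isPeriodicJet hL k) hW).intervalIntegrable _ _)
            intervalIntegrable_const
            fun x _ => noiseDensity_le (abs_psiD_mul_le hL k) hM x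
      _ = 26 * (2 / L) * M ^ 2 * L := by simp; ring

/-- Summing the one-mode estimate `integral_mode_le` over all modes. -/
lemma series_le (hL : 0 < L) (ha : ∀ k, 0 ≤ a k) (hs : Summable a) (hW : IsPeriodicJet L W) :
    (∫ x in (0 : ℝ)..L, driftSeries L a W x * (W 0 x - W 2 x))
        + ∑' k : ℤ, a k * ∫ x in (0 : ℝ)..L, noiseDensity (psiD L k) W x
      ≤ (∑' k, a k) * (10 * (2 / L)) * ∫ x in (0 : ℝ)..L, (W 0 x ^ 2 + W 1 x ^ 2) := by
  have h1 := hasSum_integral_driftSeries hL ha hs hW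
  have h2 := (summable_noise hL ha hs hW).hasSum
  have h3 := hs.hasSum.mul_right (10 * (2 / L) * ∫ x in (0 : ℝ)..L, (W 0 x ^ 2 + W 1 x ^ 2))
  rw [mul_assoc]
  refine hasSum_le (fun k => ?_) (h1.add h2) h3
  rw [← mul_add]
  exact mul_le_mul_of_nonneg_left
    (integral_mode_le hL (psiD_isPeriodicJet hL k) hW (abs_psiD_mul_le hL k)) (ha k)

/-- The estimate for the drift together with the gradient noise. The viscous term contributes
`-2ε (‖w'‖₂² + ‖w''‖₂²)`, which is `-2ε ‖w‖_{2,2}²` up to `2ε ‖w‖₂² ≤ 2 ‖w‖_{1,2}²`. -/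
lemma drift_estimate (hL : 0 < L) {lam : ℤ → ℝ} (hs : Summable fun k => lam k ^ 2)
    {ε : ℝ} (hε1 : ε ≤ 1) {w : ℝ → ℝ} (hw : ContDiff ℝ (⊤ : ℕ∞) w)
    (hper : ∀ x, w (x + L) = w x) :
    2 * (∫ x in (0 : ℝ)..L, Aop L lam ε w x * w x)
        + 2 * (∫ x in (0 : ℝ)..L, deriv (Aop L lam ε w) x * deriv w x)
        + (∑' k : ℤ, (lam k) ^ 2 * ∫ x in (0 : ℝ)..L,
            ((deriv (fun y => psi L k y * w y) x) ^ 2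
              + (deriv (deriv (fun y => psi L k y * w y)) x) ^ 2))
      ≤ ((∑' k, lam k ^ 2) * (10 * (2 / L)) + 2) * norm12sq L w - 2 * ε * norm22sq L w := by
  set a : ℤ → ℝ := fun k => lam k ^ 2 with ha_def
  have ha : ∀ k, 0 ≤ a k := fun k => sq_nonneg _
  set W : ℕ → ℝ → ℝ := fun n => deriv^[n] w with hWdef
  have hW : IsPeriodicJet L W := isPeriodicJet_of_contDiff hw hper
  have hwc := hW.continuous
  have hSc := continuous_driftSeries hL ha hs hW
  have hSDc := continuous_driftSeriesD hL ha hs hW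
  have hA : Aop L lam ε w = fun x => 1 / 2 * driftSeries L a W x + ε * W 2 x := by
    funext x
    have : ∀ k, deriv (fun y => psi L k y * deriv (fun z => psi L k z * w z) y) x
        = secondOrder (psiD L k) W x := fun k =>
      deriv_mul_deriv_mul_jet (psiD_isPeriodicJet hL k) hW x
    simp only [Aop, this]
    rfl
  have hAd : ∀ x, HasDerivAt (Aop L lam ε w) (1 / 2 * driftSeriesD L a W x + ε * W 3 x) x := by
    intro x
    rw [hA]
    exact ((hasDerivAt_driftSeries hL ha hs hW x).const_mul _).add
      ((hW.hasDerivAt 2 x).const_mul ε)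
  have hAderiv : deriv (Aop L lam ε w) = fun x => 1 / 2 * driftSeriesD L a W x + ε * W 3 x :=
    funext fun x => (hAd x).deriv
  have hnoise : ∀ k : ℤ, (∫ x in (0 : ℝ)..L,
      ((deriv (fun y => psi L k y * w y) x) ^ 2
        + (deriv (deriv (fun y => psi L k y * w y)) x) ^ 2))
      = ∫ x in (0 : ℝ)..L, noiseDensity (psiD L k) W x := by
    intro k
    have e1 := deriv_mul_jet (psiD_isPeriodicJet hL k) hW
    have e2 := deriv_deriv_mul_jet (psiD_isPeriodicJet hL k) hW
    change (∫ x in (0 : ℝ)..L, ((deriv (fun y => psiD L k 0 y * W 0 y) x) ^ 2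
        + (deriv (deriv (fun y => psiD L k 0 y * W 0 y)) x) ^ 2)) = _
    rw [e2, e1]
    rfl
  have hser := series_le hL ha hs hW
  simp_rw [hnoise]
  -- Integration by parts: `∫ (A w)' w' = -∫ (A w) w''`, and likewise `∫ w'' w = -∫ w'²`.
  have hibp : ∫ x in (0 : ℝ)..L, ((1 / 2 * driftSeriesD L a W x + ε * W 3 x) * W 1 x
      + (1 / 2 * driftSeries L a W x + ε * W 2 x) * W 2 x) = 0 := by
    refine integral_eq_zero_of_endpoints
      (G := fun x => (1 / 2 * driftSeries L a W x + ε * W 2 x) * W 1 x) (fun x => ?_)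
      (by fun_prop) (by simp only [driftSeries_endpoints hL hW, hW.endpoints])
    have := hAd x
    rw [hA] at this
    exact this.mul (hW.hasDerivAt 1 x)
  have hibp2 : ∫ x in (0 : ℝ)..L, (W 1 x * W 1 x + W 0 x * W 2 x) = 0 :=
    integral_eq_zero_of_endpoints (G := fun x => W 0 x * W 1 x)
      (fun x => (hW.hasDerivAt 0 x).mul (hW.hasDerivAt 1 x)) (by fun_prop)
      (by simp only [hW.endpoints])
  have hn0 : ∫ x in (0 : ℝ)..L, W 0 x ^ 2 ≤ norm12sq L w :=
    intervalIntegral.integral_mono_on hL.le (Continuous.intervalIntegrable (by fun_prop) _ _)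
      ((continuous_energy hW).intervalIntegrable _ _)
      fun x _ => le_add_of_nonneg_right (sq_nonneg (W 1 x))
  have h0 : 0 ≤ ∫ x in (0 : ℝ)..L, W 0 x ^ 2 :=
    intervalIntegral.integral_nonneg hL.le fun x _ => sq_nonneg _
  have e22 : norm22sq L w = ∫ x in (0 : ℝ)..L, (W 0 x ^ 2 + W 1 x ^ 2 + W 2 x ^ 2) := rfl
  have e12 : norm12sq L w = ∫ x in (0 : ℝ)..L, (W 0 x ^ 2 + W 1 x ^ 2) := rfl
  have hcomb : 2 * (∫ x in (0 : ℝ)..L, Aop L lam ε w x * w x)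
      + 2 * (∫ x in (0 : ℝ)..L, deriv (Aop L lam ε w) x * deriv w x)
      = (∫ x in (0 : ℝ)..L, driftSeries L a W x * (W 0 x - W 2 x))
        + 2 * ε * (∫ x in (0 : ℝ)..L, W 0 x ^ 2) - 2 * ε * norm22sq L w := by
    rw [hAderiv, hA, e22]
    change 2 * (∫ x in (0 : ℝ)..L, (1 / 2 * driftSeries L a W x + ε * W 2 x) * W 0 x)
      + 2 * (∫ x in (0 : ℝ)..L, (1 / 2 * driftSeriesD L a W x + ε * W 3 x) * W 1 x) = _
    have key : (2 * (∫ x in (0 : ℝ)..L, (1 / 2 * driftSeries L a W x + ε * W 2 x) * W 0 x)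
        + 2 * (∫ x in (0 : ℝ)..L, (1 / 2 * driftSeriesD L a W x + ε * W 3 x) * W 1 x))
        - ((∫ x in (0 : ℝ)..L, driftSeries L a W x * (W 0 x - W 2 x))
        + 2 * ε * (∫ x in (0 : ℝ)..L, W 0 x ^ 2)
        - 2 * ε * ∫ x in (0 : ℝ)..L, (W 0 x ^ 2 + W 1 x ^ 2 + W 2 x ^ 2))
        = 2 * (∫ x in (0 : ℝ)..L, ((1 / 2 * driftSeriesD L a W x + ε * W 3 x) * W 1 x
            + (1 / 2 * driftSeries L a W x + ε * W 2 x) * W 2 x))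
          + 2 * ε * ∫ x in (0 : ℝ)..L, (W 1 x * W 1 x + W 0 x * W 2 x) := by
      simp only [← intervalIntegral.integral_const_mul]
      rw [← intervalIntegral.integral_add, ← intervalIntegral.integral_add,
        ← intervalIntegral.integral_sub, ← intervalIntegral.integral_sub,
        ← intervalIntegral.integral_add]
      · refine intervalIntegral.integral_congr fun x _ => ?_
        ring
      all_goals exact Continuous.intervalIntegrable (by fun_prop) _ _
    rw [hibp, hibp2] at key
    linarith
  have hεn : 2 * ε * (∫ x in (0 : ℝ)..L, W 0 x ^ 2) ≤ 2 * norm12sq L w := by nlinarith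
  rw [← e12] at hser
  rw [hcomb]
  linarith

end Series

/-! ### The Lipschitz noise -/

/-- One mode of the Lipschitz noise. Writing
`(f(u) - f(v))' = f'(u) w' + (f'(u) - f'(v)) v'`, the only term that is not quadratic in
`(w, w')` is bounded by `w² v'²`, and `w²` is bounded by `‖w‖_{1,2}²` uniformly on `[0, L]`. -/
lemma lipschitz_mode_le {L : ℝ} (hL : 0 < L) {f : ℝ → ℝ} {K : ℝ} (hf : ContDiff ℝ 1 f)
    (hfb : ∀ s : ℝ, |deriv f s| ≤ K)
    (hflip : ∀ s t : ℝ, |deriv f s - deriv f t| ≤ K * |s - t|)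
    {u v : ℝ → ℝ} (hu : ContDiff ℝ (⊤ : ℕ∞) u) (hup : ∀ x, u (x + L) = u x)
    (hv : ContDiff ℝ (⊤ : ℕ∞) v) (hvp : ∀ x, v (x + L) = v x) (k : ℤ) :
    (∫ x in (0 : ℝ)..L, ((psi L k x * (f (u x) - f (v x))) ^ 2
        + (deriv (fun y => psi L k y * (f (u y) - f (v y))) x) ^ 2))
      ≤ 4 * (2 / L) * K ^ 2 * (1 / L + 2) * (1 + norm22sq L v)
          * norm12sq L (fun x => u x - v x) := by
  have hK : 0 ≤ K := (abs_nonneg _).trans (hfb 0)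
  have hP := psiD_isPeriodicJet hL k
  have hB := abs_psiD_mul_le hL k
  have hU := isPeriodicJet_of_contDiff hu hup
  have hV := isPeriodicJet_of_contDiff hv hvp
  have hW := isPeriodicJet_of_contDiff (hu.sub hv) (L := L) (fun x => by simp [hup, hvp])
  have hud : ∀ x, HasDerivAt u (deriv u x) x := hU.hasDerivAt 0
  have hvd : ∀ x, HasDerivAt v (deriv v x) x := hV.hasDerivAt 0
  have huc : Continuous u := hU.continuous 0
  have hvc : Continuous v := hV.continuous 0
  have hudc : Continuous (deriv u) := hU.continuous 1
  have hvdc : Continuous (deriv v) := hV.continuous 1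
  have hvddc : Continuous (deriv (deriv v)) := hV.continuous 2
  have hpc := hP.continuous
  have hfd : ∀ s, HasDerivAt f (deriv f s) s := fun s =>
    (hf.differentiable one_ne_zero s).hasDerivAt
  have hfc : Continuous f := hf.continuous
  have hfdc : Continuous (deriv f) := hf.continuous_deriv le_rfl
  have hLip : ∀ s t, |f s - f t| ≤ K * |s - t| := fun s t =>
    Convex.norm_image_sub_le_of_norm_deriv_le (s := Set.univ)
      (fun x _ => hf.differentiable one_ne_zero x) (fun x _ => hfb x) convex_univ
      (Set.mem_univ t) (Set.mem_univ s)
  have hwd : deriv (fun x => u x - v x) = fun x => deriv u x - deriv v x :=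
    funext fun x => ((hud x).sub (hvd x)).deriv
  have hder : deriv (fun y => psi L k y * (f (u y) - f (v y))) = fun x =>
      psiD L k 1 x * (f (u x) - f (v x))
        + psiD L k 0 x * (deriv f (u x) * deriv u x - deriv f (v x) * deriv v x) :=
    funext fun x => ((hP.hasDerivAt 0 x).mul
      (((hfd (u x)).comp x (hud x)).sub ((hfd (v x)).comp x (hvd x)))).deriv
  set N := norm12sq L (fun x => u x - v x) with hN
  have hNe : N = ∫ x in (0 : ℝ)..L, ((u x - v x) ^ 2 + (deriv u x - deriv v x) ^ 2) := by
    rw [hN, norm12sq, hwd]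
  have hN0 : 0 ≤ N := by
    rw [hNe]
    exact intervalIntegral.integral_nonneg hL.le fun x _ => by positivity
  have hsob : ∀ x ∈ Set.Icc 0 L, (u x - v x) ^ 2 ≤ (1 / L + 1) * N := fun x hx =>
    sq_le_energy hL hW hx
  have hv1 : ∫ x in (0 : ℝ)..L, (deriv v x) ^ 2 ≤ norm22sq L v :=
    intervalIntegral.integral_mono_on hL.le (Continuous.intervalIntegrable (by fun_prop) _ _)
      (Continuous.intervalIntegrable (by fun_prop) _ _)
      fun x _ => by nlinarith [sq_nonneg (v x), sq_nonneg (deriv (deriv v) x)]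
  have hv0 : 0 ≤ ∫ x in (0 : ℝ)..L, (deriv v x) ^ 2 :=
    intervalIntegral.integral_nonneg hL.le fun x _ => sq_nonneg _
  set B : ℝ := 2 / L with hBdef
  have hB0 : 0 ≤ B := by positivity
  have hpt : ∀ x ∈ Set.Icc 0 L, (psi L k x * (f (u x) - f (v x))) ^ 2
      + (psiD L k 1 x * (f (u x) - f (v x))
        + psiD L k 0 x * (deriv f (u x) * deriv u x - deriv f (v x) * deriv v x)) ^ 2
      ≤ 4 * B * K ^ 2 * ((u x - v x) ^ 2 + (deriv u x - deriv v x) ^ 2)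
        + 4 * B * K ^ 2 * ((1 / L + 1) * N) * (deriv v x) ^ 2 := by
    intro x hx
    have e0 : psi L k x = psiD L k 0 x := rfl
    rw [e0]
    set p := psiD L k 0 x
    set dp := psiD L k 1 x
    set g := f (u x) - f (v x) with hg
    set dg := deriv f (u x) * deriv u x - deriv f (v x) * deriv v x with hdg
    have hp2 : p ^ 2 ≤ B := by
      have := (le_abs_self _).trans (hB 0 0 (by norm_num) x)
      rwa [← sq] at this
    have hdp2 : dp ^ 2 ≤ B := by
      have := (le_abs_self _).trans (hB 1 1 (by norm_num) x)
      rwa [← sq] at this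
    have hg2 : g ^ 2 ≤ K ^ 2 * (u x - v x) ^ 2 := by
      have := pow_le_pow_left₀ (abs_nonneg _) (hLip (u x) (v x)) 2
      rwa [mul_pow, sq_abs, sq_abs] at this
    have hd2 : (deriv f (u x) - deriv f (v x)) ^ 2 ≤ K ^ 2 * (u x - v x) ^ 2 := by
      have := pow_le_pow_left₀ (abs_nonneg _) (hflip (u x) (v x)) 2
      rwa [mul_pow, sq_abs, sq_abs] at this
    have hf2 : (deriv f (u x)) ^ 2 ≤ K ^ 2 := by
      have := pow_le_pow_left₀ (abs_nonneg _) (hfb (u x)) 2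
      rwa [sq_abs] at this
    have two : ∀ a b : ℝ, (a + b) ^ 2 ≤ 2 * a ^ 2 + 2 * b ^ 2 := fun a b => by
      linarith [sq_nonneg (a - b), add_sq a b, sub_sq a b]
    have hdg2 : dg ^ 2 ≤ 2 * (K ^ 2 * (deriv u x - deriv v x) ^ 2)
        + 2 * (K ^ 2 * ((1 / L + 1) * N) * (deriv v x) ^ 2) := by
      have e : dg = deriv f (u x) * (deriv u x - deriv v x)
          + (deriv f (u x) - deriv f (v x)) * deriv v x := by rw [hdg]; ring
      have t := two (deriv f (u x) * (deriv u x - deriv v x))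
        ((deriv f (u x) - deriv f (v x)) * deriv v x)
      rw [← e, mul_pow, mul_pow] at t
      have t1 := mul_le_mul_of_nonneg_right hf2 (sq_nonneg (deriv u x - deriv v x))
      have t2 := mul_le_mul_of_nonneg_right
        (hd2.trans (mul_le_mul_of_nonneg_left (hsob x hx) (sq_nonneg K)))
        (sq_nonneg (deriv v x))
      linarith
    have s1 : (p * g) ^ 2 ≤ B * (K ^ 2 * (u x - v x) ^ 2) := by
      rw [mul_pow]; exact mul_le_mul hp2 hg2 (sq_nonneg _) hB0
    have s2 : (dp * g) ^ 2 ≤ B * (K ^ 2 * (u x - v x) ^ 2) := by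
      rw [mul_pow]; exact mul_le_mul hdp2 hg2 (sq_nonneg _) hB0
    have s3 : (p * dg) ^ 2 ≤ B * (2 * (K ^ 2 * (deriv u x - deriv v x) ^ 2)
        + 2 * (K ^ 2 * ((1 / L + 1) * N) * (deriv v x) ^ 2)) := by
      rw [mul_pow]; exact mul_le_mul hp2 hdg2 (sq_nonneg _) hB0
    have s4 := two (dp * g) (p * dg)
    have s5 : 0 ≤ B * (K ^ 2 * (u x - v x) ^ 2) := by positivity
    linarith
  rw [hder]
  refine (intervalIntegral.integral_mono_on hL.le ?_ ?_ hpt).trans ?_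
  · have hp0 : Continuous (psi L k) := hpc 0
    exact Continuous.intervalIntegrable (by fun_prop) _ _
  · exact Continuous.intervalIntegrable (by fun_prop) _ _
  · rw [intervalIntegral.integral_add (Continuous.intervalIntegrable (by fun_prop) _ _)
      (Continuous.intervalIntegrable (by fun_prop) _ _), intervalIntegral.integral_const_mul,
      intervalIntegral.integral_const_mul, ← hNe]
    have c0 : 0 ≤ 4 * B * K ^ 2 := by positivity
    have cL0 : 0 ≤ 1 / L := by positivity
    have n0 : 0 ≤ norm22sq L v := hv0.trans hv1
    have hfin : N + (1 / L + 1) * N * (∫ x in (0 : ℝ)..L, (deriv v x) ^ 2)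
        ≤ (1 / L + 2) * (1 + norm22sq L v) * N := by
      have t1 := mul_le_mul_of_nonneg_left hv1 (mul_nonneg (add_nonneg cL0 zero_le_one) hN0)
      have t2 := mul_nonneg n0 hN0
      have t3 := mul_nonneg cL0 hN0
      linarith
    have := mul_le_mul_of_nonneg_left hfin c0
    linarith

/-- Local monotonicity estimate (condition (H2')) for the drift `A^ε` together with the
noise coefficients, with a constant independent of `ε`, `u` and `v`. -/
theorem local_monotonicity_estimate (L : ℝ) (hL : 0 < L)
    (lam gam : ℤ → ℝ) (hpos : ∀ k : ℤ, 0 ≤ lam k)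
    (hsum : Summable fun k : ℤ => (lam k) ^ 2 + (gam k) ^ 2)
    (f : ℝ → ℝ) (K : ℝ) (hf : ContDiff ℝ 1 f) (hf0 : f 0 = 0)
    (hfb : ∀ s : ℝ, |deriv f s| ≤ K)
    (hflip : ∀ s t : ℝ, |deriv f s - deriv f t| ≤ K * |s - t|) :
    ∃ C : ℝ, 0 < C ∧
      ∀ ε : ℝ, 0 < ε → ε ≤ 1 →
      ∀ u v : ℝ → ℝ, ContDiff ℝ (⊤ : ℕ∞) u → (∀ x : ℝ, u (x + L) = u x) →
        ContDiff ℝ (⊤ : ℕ∞) v → (∀ x : ℝ, v (x + L) = v x) →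
        2 * (∫ x in (0 : ℝ)..L,
              Aop L lam ε (fun y => u y - v y) x * (u x - v x))
          + 2 * (∫ x in (0 : ℝ)..L,
              deriv (Aop L lam ε (fun y => u y - v y)) x
                * deriv (fun y => u y - v y) x)
          + (∑' k : ℤ, (lam k) ^ 2
              * ∫ x in (0 : ℝ)..L,
                  ((deriv (fun y => psi L k y * (u y - v y)) x) ^ 2
                    + (deriv (deriv (fun y => psi L k y * (u y - v y))) x) ^ 2))
          + (∑' k : ℤ, (gam k) ^ 2
              * ∫ x in (0 : ℝ)..L,
                  ((psi L k x * (f (u x) - f (v x))) ^ 2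
                    + (deriv (fun y => psi L k y * (f (u y) - f (v y))) x) ^ 2))
          ≤ C * (1 + norm22sq L v) * norm12sq L (fun x => u x - v x)
            - 2 * ε * norm22sq L (fun x => u x - v x) := by
  have hlam : Summable fun k => lam k ^ 2 :=
    Summable.of_nonneg_of_le (fun k => sq_nonneg _)
      (fun k => le_add_of_nonneg_right (sq_nonneg (gam k))) hsum
  have hgam : Summable fun k => gam k ^ 2 :=
    Summable.of_nonneg_of_le (fun k => sq_nonneg _)
      (fun k => le_add_of_nonneg_left (sq_nonneg (lam k))) hsum
  have hL0 : 0 ≤ ∑' k, lam k ^ 2 := tsum_nonneg fun k => sq_nonneg _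
  have hG0 : 0 ≤ ∑' k, gam k ^ 2 := tsum_nonneg fun k => sq_nonneg _
  refine ⟨((∑' k, lam k ^ 2) * (10 * (2 / L)) + 2)
    + (∑' k, gam k ^ 2) * (4 * (2 / L) * K ^ 2 * (1 / L + 2)), by positivity, ?_⟩
  intro ε _ hε1 u v hu hup hv hvp
  have h1 := drift_estimate hL hlam hε1 (hu.sub hv) (fun x => by simp [hup, hvp])
  have hterm := lipschitz_mode_le hL hf hfb hflip hu hup hv hvp
  have hN : 0 ≤ norm12sq L (fun x => u x - v x) :=
    intervalIntegral.integral_nonneg hL.le fun x _ => by positivity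
  have hV : 0 ≤ norm22sq L v :=
    intervalIntegral.integral_nonneg hL.le fun x _ => by positivity
  have hbd := hgam.mul_right (4 * (2 / L) * K ^ 2 * (1 / L + 2) * (1 + norm22sq L v)
    * norm12sq L (fun x => u x - v x))
  have hle := fun k => mul_le_mul_of_nonneg_left (hterm k) (sq_nonneg (gam k))
  have h2 := Summable.tsum_le_tsum hle
    (Summable.of_nonneg_of_le (fun k => mul_nonneg (sq_nonneg _)
      (intervalIntegral.integral_nonneg hL.le fun x _ => by positivity)) hle hbd) hbd
  rw [tsum_mul_right] at h2
  have h3 : 0 ≤ ((∑' k, lam k ^ 2) * (10 * (2 / L)) + 2)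
      * (norm22sq L v * norm12sq L (fun x => u x - v x)) := by positivity
  linarith

end
end

section
/- There exists a constant C > 0, independent of ε and u, such that for every ε ∈ (0,1] and every smooth L-periodic function u: 2 ∫₀^L (A^ε u)(x) u(x) dx + 2 ∫₀^L (A^ε u)'(x) u'(x) dx + Σ_{k∈ℤ} λ_k² ∫₀^L [ ((Ψ_k u)'(x))² + ((Ψ_k u)''(x))² ] dx + Σ_{k∈ℤ} γ_k² ∫₀^L [ (Ψ_k(x) f(u(x)))² + ((Ψ_k f(u))'(x))² ] dx ≤ C ‖u‖_{1,2}² − 2ε ‖u‖_{2,2}². -/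
/-!
Fix `k` and write `p = Ψ_k`, `q = p'`, `r = p'' = -κ² p` with `κ = 2πk/L`. The normalization `c_k`
gives `p², q², r² ≤ 2/L` uniformly in `k`; since `p p''' = q r`, every product of derivatives of
`p` of total order at most three is controlled by these three bounds.

With `g = (p (p u)')'`, the integrand `g u + g' u' + ((p u)')² + ((p u)'')²` equals an exact
derivative of an `L`-periodic function plus a quadratic form in `(u, u')` whose coefficients are
bounded by multiples of `2/L`: the terms that contain `u''` cancel up to exact derivatives. Hence
its integral over a period is at most `12 (2/L) ‖u‖_{1,2}²` (`transport_bound`), uniformly in `k`,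
and the weights `λ_k²` are summable. The viscous part gives `-2ε ∫ (u'² + u''²)`
(`viscous_identity`), and the noise coefficients with weights `γ_k²` are bounded pointwise through
`|f s| ≤ K |s|` and `|f'| ≤ K` (`noise_bound`).

A smooth periodic `u` has bounded derivatives, so the series defining `A^ε u` may be differentiated
and integrated term by term.
-/

open MeasureTheory

noncomputable section

/-- The facts about one basis function `p = Ψ_k` that enter the estimate: `q = p'`, `r = p''`,
the relation `r = -s p` (with `s = κ²`), equal values at `0` and `L` (all that integration by
parts over a period needs), and bounds by `M`. -/
structure IsMode (L M s : ℝ) (p q r : ℝ → ℝ) : Prop where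
  dp : ∀ x, HasDerivAt p (q x) x
  dq : ∀ x, HasDerivAt q (r x) x
  hr : ∀ x, r x = -s * p x
  pp : p L = p 0
  pq : q L = q 0
  bp : ∀ x, p x ^ 2 ≤ M
  bq : ∀ x, q x ^ 2 ≤ M
  br : ∀ x, r x ^ 2 ≤ M

/-- `u1, u2, u3` are the first three derivatives of `u`, with a common bound `B`; periodicity is
recorded only as equality of values at `0` and `L`. -/
structure IsJet (L B : ℝ) (u u1 u2 u3 : ℝ → ℝ) : Prop where
  d0 : ∀ x, HasDerivAt u (u1 x) x
  d1 : ∀ x, HasDerivAt u1 (u2 x) x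
  d2 : ∀ x, HasDerivAt u2 (u3 x) x
  c3 : Continuous u3
  p0 : u L = u 0
  p1 : u1 L = u1 0
  p2 : u2 L = u2 0
  b0 : ∀ x, |u x| ≤ B
  b1 : ∀ x, |u1 x| ≤ B
  b2 : ∀ x, |u2 x| ≤ B
  b3 : ∀ x, |u3 x| ≤ B

lemma abs_mul_le_of_sq {a b M : ℝ} (ha : a ^ 2 ≤ M) (hb : b ^ 2 ≤ M) : |a * b| ≤ M := by
  rw [abs_le]
  constructor <;> nlinarith [sq_nonneg (a + b), sq_nonneg (a - b)]

namespace IsMode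

variable {L M s : ℝ} {p q r : ℝ → ℝ}

lemma cp (h : IsMode L M s p q r) : Continuous p :=
  continuous_iff_continuousAt.2 fun x => (h.dp x).continuousAt

lemma cq (h : IsMode L M s p q r) : Continuous q :=
  continuous_iff_continuousAt.2 fun x => (h.dq x).continuousAt

lemma dr (h : IsMode L M s p q r) (x : ℝ) : HasDerivAt r (-s * q x) x := by
  have : r = fun x => -s * p x := funext h.hr
  rw [this]
  exact (h.dp x).const_mul _

lemma cr (h : IsMode L M s p q r) : Continuous r :=
  continuous_iff_continuousAt.2 fun x => (h.dr x).continuousAt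

lemma pr (h : IsMode L M s p q r) : r L = r 0 := by
  rw [h.hr, h.hr, h.pp]

lemma nonneg (h : IsMode L M s p q r) : 0 ≤ M := (sq_nonneg _).trans (h.bp 0)

end IsMode

namespace IsJet

variable {L B : ℝ} {u u1 u2 u3 : ℝ → ℝ}

lemma c0 (h : IsJet L B u u1 u2 u3) : Continuous u :=
  continuous_iff_continuousAt.2 fun x => (h.d0 x).continuousAt

lemma c1 (h : IsJet L B u u1 u2 u3) : Continuous u1 :=
  continuous_iff_continuousAt.2 fun x => (h.d1 x).continuousAt

lemma c2 (h : IsJet L B u u1 u2 u3) : Continuous u2 :=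
  continuous_iff_continuousAt.2 fun x => (h.d2 x).continuousAt

lemma nonneg (h : IsJet L B u u1 u2 u3) : 0 ≤ B := (abs_nonneg _).trans (h.b0 0)

end IsJet

/-! ### The basis functions -/

lemma cL_sq (L : ℝ) (hL : 0 < L) (k : ℤ) (a : ℝ)
    (ha : a ≤ 1 + (2 * Real.pi * (k : ℝ) / L) ^ 2 + (2 * Real.pi * (k : ℝ) / L) ^ 4) :
    cL L k ^ 2 * a ≤ 2 / L := by
  unfold cL
  set κ := 2 * Real.pi * (k : ℝ) / L
  have hD : 0 < 1 + κ ^ 2 + κ ^ 4 := by positivity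
  rw [Real.sq_sqrt (by positivity), div_mul_eq_mul_div, div_le_div_iff₀ (by positivity) hL]
  nlinarith [mul_le_mul_of_nonneg_left ha hL.le]

lemma exists_mode (L : ℝ) (hL : 0 < L) (k : ℤ) :
    ∃ s q r, IsMode L (2 / L) s (psi L k) q r := by
  set κ := 2 * Real.pi * (k : ℝ) / L with hκ
  have b0 : cL L k ^ 2 ≤ 2 / L := by
    have := cL_sq L hL k 1 (by rw [← hκ]; nlinarith [sq_nonneg κ, sq_nonneg (κ ^ 2)])
    linarith
  have b2 : cL L k ^ 2 * κ ^ 2 ≤ 2 / L :=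
    cL_sq L hL k _ (by rw [← hκ]; nlinarith [sq_nonneg κ, sq_nonneg (κ ^ 2)])
  have b4 : cL L k ^ 2 * κ ^ 4 ≤ 2 / L :=
    cL_sq L hL k _ (by rw [← hκ]; nlinarith [sq_nonneg κ, sq_nonneg (κ ^ 2)])
  have hlin : ∀ x : ℝ, HasDerivAt (fun y => κ * y) κ x := fun x => by
    simpa using (hasDerivAt_id x).const_mul κ
  have hper : κ * L = (k : ℝ) * (2 * Real.pi) := by rw [hκ]; field_simp
  have hcosL : Real.cos (κ * L) = Real.cos (κ * 0) := by
    rw [hper, Real.cos_int_mul_two_pi]; simp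
  have hsinL : Real.sin (κ * L) = Real.sin (κ * 0) := by
    rw [hper, mul_comm, mul_zero, Real.sin_zero]
    have := Real.sin_add_int_mul_two_pi 0 k
    rw [mul_comm]; simpa using this
  have arg : ∀ x : ℝ, 2 * Real.pi * (k : ℝ) * x / L = κ * x := fun x => by rw [hκ]; ring
  have bd : ∀ a t : ℝ, a ≤ 2 / L → 0 ≤ a → t ^ 2 ≤ 1 → a * t ^ 2 ≤ 2 / L := fun a t h1 h2 h3 =>
    (mul_le_of_le_one_right h2 h3).trans h1
  have pc0 : 0 ≤ cL L k ^ 2 := sq_nonneg _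
  have pc2 : 0 ≤ cL L k ^ 2 * κ ^ 2 := by positivity
  have pc4 : 0 ≤ cL L k ^ 2 * κ ^ 4 := by positivity
  rcases lt_trichotomy 0 k with hk | hk | hk
  · have hpsi : psi L k = fun x => cL L k * Real.cos (κ * x) := by
      funext x; simp [psi, hk, arg]
    rw [hpsi]
    refine ⟨κ ^ 2, fun x => -(cL L k * κ * Real.sin (κ * x)),
      fun x => -κ ^ 2 * (cL L k * Real.cos (κ * x)), ?_, ?_, ?_, ?_, ?_, ?_, ?_, ?_⟩
    · intro x
      exact (((Real.hasDerivAt_cos _).comp x (hlin x)).const_mul (cL L k)).congr_deriv (by ring)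
    · intro x
      exact ((((Real.hasDerivAt_sin _).comp x (hlin x)).const_mul (cL L k * κ)).neg).congr_deriv
        (by ring)
    · intro x; rfl
    · simp only [hcosL]
    · simp only [hsinL]
    · intro x; have := bd _ _ b0 pc0 (Real.cos_sq_le_one (κ * x)); nlinarith
    · intro x; have := bd _ _ b2 pc2 (Real.sin_sq_le_one (κ * x)); nlinarith
    · intro x; have := bd _ _ b4 pc4 (Real.cos_sq_le_one (κ * x)); nlinarith
  · subst hk
    have hpsi : psi L 0 = fun _ => cL L 0 / Real.sqrt 2 := by
      funext x; simp [psi]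
    rw [hpsi]
    have h2L : 0 ≤ 2 / L := by positivity
    refine ⟨0, fun _ => 0, fun _ => 0, fun x => hasDerivAt_const _ _, fun x => hasDerivAt_const _ _,
      by simp, rfl, rfl, ?_, by simpa using h2L, by simpa using h2L⟩
    intro x
    simp only [div_pow]
    rw [Real.sq_sqrt (by norm_num)]
    linarith
  · have hpsi : psi L k = fun x => cL L k * Real.sin (κ * x) := by
      funext x; simp [psi, hk.ne, not_lt.2 hk.le, arg]
    rw [hpsi]
    refine ⟨κ ^ 2, fun x => cL L k * κ * Real.cos (κ * x),
      fun x => -κ ^ 2 * (cL L k * Real.sin (κ * x)), ?_, ?_, ?_, ?_, ?_, ?_, ?_, ?_⟩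
    · intro x
      exact (((Real.hasDerivAt_sin _).comp x (hlin x)).const_mul (cL L k)).congr_deriv (by ring)
    · intro x
      exact (((Real.hasDerivAt_cos _).comp x (hlin x)).const_mul (cL L k * κ)).congr_deriv
        (by ring)
    · intro x; rfl
    · simp only [hsinL]
    · simp only [hcosL]
    · intro x; have := bd _ _ b0 pc0 (Real.sin_sq_le_one (κ * x)); nlinarith
    · intro x; have := bd _ _ b2 pc2 (Real.cos_sq_le_one (κ * x)); nlinarith
    · intro x; have := bd _ _ b4 pc4 (Real.sin_sq_le_one (κ * x)); nlinarith

/-! ### Smooth periodic functions -/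

lemma periodic_deriv {u : ℝ → ℝ} {L : ℝ} (h : Function.Periodic u L) :
    Function.Periodic (deriv u) L := fun x => by
  rw [← deriv_comp_add_const]
  congr 1
  exact funext h

lemma periodic_bound {u : ℝ → ℝ} {L : ℝ} (hL : 0 < L) (h : Function.Periodic u L)
    (hc : Continuous u) : ∃ B, ∀ x, |u x| ≤ B := by
  obtain ⟨B, hB⟩ := (isCompact_Icc (a := (0 : ℝ)) (b := L)).exists_bound_of_continuousOn
    hc.continuousOn
  refine ⟨B, fun x => ?_⟩
  obtain ⟨y, hy, hxy⟩ := h.exists_mem_Ico₀ hL x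
  rw [hxy]
  exact hB y ⟨hy.1, hy.2.le⟩

lemma exists_jet {L : ℝ} (hL : 0 < L) {u : ℝ → ℝ} (hu : ContDiff ℝ (⊤ : ℕ∞) u)
    (hp : ∀ x : ℝ, u (x + L) = u x) :
    ∃ B, IsJet L B u (deriv u) (deriv (deriv u)) (deriv (deriv (deriv u))) := by
  have s1 := (contDiff_infty_iff_deriv.1 hu).2
  have s2 := (contDiff_infty_iff_deriv.1 s1).2
  have s3 := (contDiff_infty_iff_deriv.1 s2).2
  have q0 : Function.Periodic u L := hp
  have q1 := periodic_deriv q0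
  have q2 := periodic_deriv q1
  have q3 := periodic_deriv q2
  obtain ⟨B0, h0⟩ := periodic_bound hL q0 hu.continuous
  obtain ⟨B1, h1⟩ := periodic_bound hL q1 s1.continuous
  obtain ⟨B2, h2⟩ := periodic_bound hL q2 s2.continuous
  obtain ⟨B3, h3⟩ := periodic_bound hL q3 s3.continuous
  have e : ∀ {v : ℝ → ℝ}, Function.Periodic v L → v L = v 0 := fun h => by simpa using h 0
  refine ⟨max (max B0 B1) (max B2 B3),
    fun x => ((contDiff_infty_iff_deriv.1 hu).1 x).hasDerivAt,
    fun x => ((contDiff_infty_iff_deriv.1 s1).1 x).hasDerivAt,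
    fun x => ((contDiff_infty_iff_deriv.1 s2).1 x).hasDerivAt,
    s3.continuous, e q0, e q1, e q2, ?_, ?_, ?_, ?_⟩
  · exact fun x => (h0 x).trans (by simp)
  · exact fun x => (h1 x).trans (by simp)
  · exact fun x => (h2 x).trans (by simp)
  · exact fun x => (h3 x).trans (by simp)

/-! ### Estimates for a single mode -/

/-- `(p (p u)')'`, expanded, in terms of the values of `p, p', p'', u, u', u''`. -/
def gTerm (p q r u u1 u2 : ℝ) : ℝ := (q ^ 2 + p * r) * u + 3 * (p * q) * u1 + p ^ 2 * u2

/-- `(p (p u)')''`, expanded; the relation `p p''' = p' p''` has been used. -/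
def gTerm' (p q r u u1 u2 u3 : ℝ) : ℝ :=
  4 * (q * r) * u + 4 * (q ^ 2 + p * r) * u1 + 5 * (p * q) * u2 + p ^ 2 * u3

section single

variable {L M B s : ℝ} {p q r u u1 u2 u3 : ℝ → ℝ}

lemma deriv_mul_mode (h : IsMode L M s p q r) (j : IsJet L B u u1 u2 u3) :
    deriv (fun y => p y * u y) = fun x => q x * u x + p x * u1 x :=
  funext fun x => ((h.dp x).mul (j.d0 x)).deriv

lemma hasDerivAt_mul_mode (h : IsMode L M s p q r) (j : IsJet L B u u1 u2 u3) (x : ℝ) :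
    HasDerivAt (fun x => q x * u x + p x * u1 x) (r x * u x + 2 * q x * u1 x + p x * u2 x) x :=
  (((h.dq x).mul (j.d0 x)).add ((h.dp x).mul (j.d1 x))).congr_deriv (by ring)

lemma deriv_deriv_mul_mode (h : IsMode L M s p q r) (j : IsJet L B u u1 u2 u3) :
    deriv (deriv (fun y => p y * u y)) =
      fun x => r x * u x + 2 * q x * u1 x + p x * u2 x := by
  rw [deriv_mul_mode h j]
  exact funext fun x => (hasDerivAt_mul_mode h j x).deriv

lemma hasDerivAt_inner (h : IsMode L M s p q r) (j : IsJet L B u u1 u2 u3) (x : ℝ) :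
    HasDerivAt (fun y => p y * (q y * u y + p y * u1 y))
      (gTerm (p x) (q x) (r x) (u x) (u1 x) (u2 x)) x :=
  ((h.dp x).mul (hasDerivAt_mul_mode h j x)).congr_deriv (by unfold gTerm; ring)

lemma deriv_inner (h : IsMode L M s p q r) (j : IsJet L B u u1 u2 u3) (x : ℝ) :
    deriv (fun y => p y * deriv (fun z => p z * u z) y) x =
      gTerm (p x) (q x) (r x) (u x) (u1 x) (u2 x) := by
  rw [deriv_mul_mode h j]
  exact (hasDerivAt_inner h j x).deriv

lemma hasDerivAt_gTerm (h : IsMode L M s p q r) (j : IsJet L B u u1 u2 u3) (x : ℝ) :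
    HasDerivAt (fun x => gTerm (p x) (q x) (r x) (u x) (u1 x) (u2 x))
      (gTerm' (p x) (q x) (r x) (u x) (u1 x) (u2 x) (u3 x)) x := by
  unfold gTerm gTerm'
  refine ((((((h.dq x).pow 2).add ((h.dp x).mul (h.dr x))).mul (j.d0 x)).add
    ((((h.dp x).mul (h.dq x)).const_mul 3).mul (j.d1 x))).add
      (((h.dp x).pow 2).mul (j.d2 x))).congr_deriv ?_
  simp only [Pi.add_apply, Pi.mul_apply, Pi.pow_apply]
  rw [h.hr]
  push_cast
  ring

lemma abs_mul_le' {a b A B : ℝ} (ha : |a| ≤ A) (hb : |b| ≤ B) : |a * b| ≤ A * B := by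
  rw [abs_mul]
  exact mul_le_mul ha hb (abs_nonneg _) ((abs_nonneg _).trans ha)

lemma abs_gTerm_le (h : IsMode L M s p q r) (j : IsJet L B u u1 u2 u3) (x : ℝ) :
    |gTerm (p x) (q x) (r x) (u x) (u1 x) (u2 x)| ≤ 18 * M * B := by
  have hMB := mul_nonneg h.nonneg j.nonneg
  have e1 := abs_le.1 (abs_mul_le' (abs_mul_le_of_sq (h.bq x) (h.bq x)) (j.b0 x))
  have e2 := abs_le.1 (abs_mul_le' (abs_mul_le_of_sq (h.bp x) (h.br x)) (j.b0 x))
  have e3 := abs_le.1 (abs_mul_le' (abs_mul_le_of_sq (h.bp x) (h.bq x)) (j.b1 x))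
  have e4 := abs_le.1 (abs_mul_le' (abs_mul_le_of_sq (h.bp x) (h.bp x)) (j.b2 x))
  unfold gTerm
  rw [abs_le]
  constructor <;> linarith

lemma abs_gTerm'_le (h : IsMode L M s p q r) (j : IsJet L B u u1 u2 u3) (x : ℝ) :
    |gTerm' (p x) (q x) (r x) (u x) (u1 x) (u2 x) (u3 x)| ≤ 18 * M * B := by
  have e0 := abs_le.1 (abs_mul_le' (abs_mul_le_of_sq (h.bq x) (h.br x)) (j.b0 x))
  have e1 := abs_le.1 (abs_mul_le' (abs_mul_le_of_sq (h.bq x) (h.bq x)) (j.b1 x))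
  have e2 := abs_le.1 (abs_mul_le' (abs_mul_le_of_sq (h.bp x) (h.br x)) (j.b1 x))
  have e3 := abs_le.1 (abs_mul_le' (abs_mul_le_of_sq (h.bp x) (h.bq x)) (j.b2 x))
  have e4 := abs_le.1 (abs_mul_le' (abs_mul_le_of_sq (h.bp x) (h.bp x)) (j.b3 x))
  unfold gTerm'
  rw [abs_le]
  constructor <;> linarith

lemma continuous_gTerm (h : IsMode L M s p q r) (j : IsJet L B u u1 u2 u3) :
    Continuous fun x => gTerm (p x) (q x) (r x) (u x) (u1 x) (u2 x) := by
  have := h.cp; have := h.cq; have := h.cr; have := j.c0; have := j.c1; have := j.c2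
  unfold gTerm
  fun_prop

lemma continuous_gTerm' (h : IsMode L M s p q r) (j : IsJet L B u u1 u2 u3) :
    Continuous fun x => gTerm' (p x) (q x) (r x) (u x) (u1 x) (u2 x) (u3 x) := by
  have := h.cp; have := h.cq; have := h.cr; have := j.c0; have := j.c1; have := j.c2
  have := j.c3
  unfold gTerm'
  fun_prop

lemma continuous_square (h : IsMode L M s p q r) (j : IsJet L B u u1 u2 u3) :
    Continuous fun x => (q x * u x + p x * u1 x) ^ 2
      + (r x * u x + 2 * q x * u1 x + p x * u2 x) ^ 2 := by
  have := h.cp; have := h.cq; have := h.cr; have := j.c0; have := j.c1; have := j.c2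
  fun_prop

/-- The cancellation behind the estimate: modulo the derivative of the periodic function `H`
below, no second derivative of `u` survives. -/
lemma transport_bound (hL : 0 < L) (h : IsMode L M s p q r) (j : IsJet L B u u1 u2 u3) :
    (∫ x in (0 : ℝ)..L, gTerm (p x) (q x) (r x) (u x) (u1 x) (u2 x) * u x)
      + (∫ x in (0 : ℝ)..L, gTerm' (p x) (q x) (r x) (u x) (u1 x) (u2 x) (u3 x) * u1 x)
      + (∫ x in (0 : ℝ)..L, ((q x * u x + p x * u1 x) ^ 2
          + (r x * u x + 2 * q x * u1 x + p x * u2 x) ^ 2))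
      ≤ 12 * M * ∫ x in (0 : ℝ)..L, (u x ^ 2 + u1 x ^ 2) := by
  have cp := h.cp; have cq := h.cq; have cr := h.cr
  have c0 := j.c0; have c1 := j.c1; have c2 := j.c2
  have cg := continuous_gTerm h j
  have cg' := continuous_gTerm' h j
  have cs := continuous_square h j
  set H : ℝ → ℝ := fun x => p x * (q x * u x + p x * u1 x) * u x
    + gTerm (p x) (q x) (r x) (u x) (u1 x) (u2 x) * u1 x
    + (p x * r x - q x ^ 2) * (u x * u1 x) + (1 / 2) * (p x * q x) * u1 x ^ 2 with hH
  set R : ℝ → ℝ := fun x => q x ^ 2 * u x ^ 2 + p x * q x * (u x * u1 x)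
    + (r x * u x + 2 * q x * u1 x) ^ 2 - (p x * r x - q x ^ 2) * u1 x ^ 2
    - (1 / 2) * (q x ^ 2 + p x * r x) * u1 x ^ 2 with hR
  set I : ℝ → ℝ := fun x => gTerm (p x) (q x) (r x) (u x) (u1 x) (u2 x) * u x
    + gTerm' (p x) (q x) (r x) (u x) (u1 x) (u2 x) (u3 x) * u1 x
    + ((q x * u x + p x * u1 x) ^ 2
          + (r x * u x + 2 * q x * u1 x + p x * u2 x) ^ 2) with hI
  have cI : Continuous I := by rw [hI]; fun_prop
  have cR : Continuous R := by rw [hR]; fun_prop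
  have dH : ∀ x, HasDerivAt H (I x - R x) x := by
    intro x
    refine (((((hasDerivAt_inner h j x).mul (j.d0 x)).add
      ((hasDerivAt_gTerm h j x).mul (j.d1 x))).add
      ((((h.dp x).mul (h.dr x)).sub ((h.dq x).pow 2)).mul ((j.d0 x).mul (j.d1 x)))).add
      ((((h.dp x).mul (h.dq x)).const_mul (1 / 2)).mul ((j.d1 x).pow 2))).congr_deriv ?_
    simp only [Pi.mul_apply, Pi.pow_apply, Pi.sub_apply, hI, hR, gTerm, gTerm']
    rw [h.hr]
    push_cast
    ring
  have hHL : H L = H 0 := by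
    simp only [hH, h.pp, h.pq, h.pr, j.p0, j.p1, j.p2]
  have key : (∫ x in (0 : ℝ)..L, (I x - R x)) = 0 := by
    rw [intervalIntegral.integral_eq_sub_of_hasDerivAt (fun x _ => dH x)
      ((cI.sub cR).intervalIntegrable _ _), hHL, sub_self]
  rw [intervalIntegral.integral_sub (cI.intervalIntegrable _ _) (cR.intervalIntegrable _ _)] at key
  rw [← intervalIntegral.integral_add ((by fun_prop : Continuous _).intervalIntegrable _ _)
      ((by fun_prop : Continuous _).intervalIntegrable _ _),
    ← intervalIntegral.integral_add ((by fun_prop : Continuous _).intervalIntegrable _ _)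
      (cs.intervalIntegrable _ _), ← intervalIntegral.integral_const_mul]
  change (∫ x in (0 : ℝ)..L, I x) ≤ _
  rw [sub_eq_zero.1 key]
  refine intervalIntegral.integral_mono_on hL.le (cR.intervalIntegrable _ _)
    ((by fun_prop : Continuous fun x => 12 * M * (u x ^ 2 + u1 x ^ 2)).intervalIntegrable _ _) ?_
  intro x _
  have e1 := mul_le_mul_of_nonneg_right (h.bq x) (sq_nonneg (u x))
  have e2 := mul_le_mul_of_nonneg_right (h.br x) (sq_nonneg (u x))
  have e3 := mul_le_mul_of_nonneg_right (h.bq x) (sq_nonneg (u1 x))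
  have e4 := mul_le_mul_of_nonneg_right (abs_le.1 (abs_mul_le_of_sq (h.bp x) (h.br x))).1
    (sq_nonneg (u1 x))
  have e5 := abs_le.1 (abs_mul_le_of_sq (h.bp x) (h.bq x))
  have e6 : p x * q x * (u x * u1 x) ≤ M * ((u x ^ 2 + u1 x ^ 2) / 2) := by
    nlinarith [mul_nonneg (sub_nonneg.2 e5.2) (sq_nonneg (u x + u1 x)),
      mul_nonneg (by linarith [e5.1] : 0 ≤ M + p x * q x) (sq_nonneg (u x - u1 x))]
  have e7 : (r x * u x + 2 * q x * u1 x) ^ 2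
      ≤ 2 * (r x ^ 2 * u x ^ 2) + 8 * (q x ^ 2 * u1 x ^ 2) := by
    nlinarith [sq_nonneg (r x * u x - 2 * q x * u1 x)]
  have z1 := mul_nonneg h.nonneg (sq_nonneg (u x))
  have z2 := mul_nonneg h.nonneg (sq_nonneg (u1 x))
  have z3 : 0 ≤ q x ^ 2 * u1 x ^ 2 := by positivity
  simp only [hR]
  linarith

lemma viscous_identity (j : IsJet L B u u1 u2 u3) :
    (∫ x in (0 : ℝ)..L, u2 x * u x) + (∫ x in (0 : ℝ)..L, u3 x * u1 x)
      = (∫ x in (0 : ℝ)..L, u x ^ 2)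
        - ∫ x in (0 : ℝ)..L, (u x ^ 2 + u1 x ^ 2 + u2 x ^ 2) := by
  have c0 := j.c0; have c1 := j.c1; have c2 := j.c2; have c3 := j.c3
  have dH : ∀ x, HasDerivAt (fun x => u x * u1 x + u1 x * u2 x)
      ((u2 x * u x + u3 x * u1 x) - (u x ^ 2 - (u x ^ 2 + u1 x ^ 2 + u2 x ^ 2))) x := fun x =>
    (((j.d0 x).mul (j.d1 x)).add ((j.d1 x).mul (j.d2 x))).congr_deriv (by ring)
  have key := intervalIntegral.integral_eq_sub_of_hasDerivAt (a := 0) (b := L) (fun x _ => dH x)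
    ((by fun_prop : Continuous _).intervalIntegrable _ _)
  rw [intervalIntegral.integral_sub ((by fun_prop : Continuous _).intervalIntegrable _ _)
      ((by fun_prop : Continuous _).intervalIntegrable _ _),
    intervalIntegral.integral_sub ((by fun_prop : Continuous _).intervalIntegrable _ _)
      ((by fun_prop : Continuous _).intervalIntegrable _ _),
    intervalIntegral.integral_add ((by fun_prop : Continuous _).intervalIntegrable _ _)
      ((by fun_prop : Continuous _).intervalIntegrable _ _), j.p0, j.p1, j.p2, sub_self] at key
  linarith

lemma noise_bound (hL : 0 < L) (h : IsMode L M s p q r) (j : IsJet L B u u1 u2 u3)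
    {f : ℝ → ℝ} {K : ℝ} (hf : ContDiff ℝ 1 f) (hf0 : f 0 = 0) (hfb : ∀ s, |deriv f s| ≤ K) :
    (∫ x in (0 : ℝ)..L, ((p x * f (u x)) ^ 2 + (deriv (fun y => p y * f (u y)) x) ^ 2))
      ≤ 3 * M * K ^ 2 * ∫ x in (0 : ℝ)..L, (u x ^ 2 + u1 x ^ 2) := by
  have cp := h.cp; have cq := h.cq
  have c0 := j.c0; have c1 := j.c1
  have cf := hf.continuous
  have cf' := hf.continuous_deriv le_rfl
  have df : Differentiable ℝ f := hf.differentiable one_ne_zero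
  have hd : ∀ x, deriv (fun y => p y * f (u y)) x
      = q x * f (u x) + p x * (deriv f (u x) * u1 x) := fun x =>
    ((h.dp x).mul ((df (u x)).hasDerivAt.comp x (j.d0 x))).deriv
  simp only [hd]
  rw [← intervalIntegral.integral_const_mul]
  refine intervalIntegral.integral_mono_on hL.le
    ((by fun_prop : Continuous _).intervalIntegrable _ _)
    ((by fun_prop : Continuous _).intervalIntegrable _ _) ?_
  intro x _
  have hfu : |f (u x)| ≤ K * |u x| := by
    have := Convex.norm_image_sub_le_of_norm_deriv_le (f := f) (s := Set.univ) (C := K)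
      (x := 0) (y := u x) (fun y _ => df y) (fun y _ => hfb y) convex_univ trivial trivial
    simpa [hf0] using this
  have f1 : f (u x) ^ 2 ≤ K ^ 2 * u x ^ 2 := by
    have := pow_le_pow_left₀ (abs_nonneg _) hfu 2
    rwa [mul_pow, sq_abs, sq_abs] at this
  have f2 : deriv f (u x) ^ 2 ≤ K ^ 2 := by
    have := pow_le_pow_left₀ (abs_nonneg _) (hfb (u x)) 2
    rwa [sq_abs] at this
  have hM := h.nonneg
  have g1 : p x ^ 2 * f (u x) ^ 2 ≤ M * (K ^ 2 * u x ^ 2) :=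
    mul_le_mul (h.bp x) f1 (sq_nonneg _) hM
  have g2 : q x ^ 2 * f (u x) ^ 2 ≤ M * (K ^ 2 * u x ^ 2) :=
    mul_le_mul (h.bq x) f1 (sq_nonneg _) hM
  have g3 : p x ^ 2 * (deriv f (u x) ^ 2 * u1 x ^ 2) ≤ M * (K ^ 2 * u1 x ^ 2) :=
    mul_le_mul (h.bp x) (mul_le_mul_of_nonneg_right f2 (sq_nonneg _)) (by positivity) hM
  have g4 : 0 ≤ M * (K ^ 2 * u1 x ^ 2) := by positivity
  nlinarith [sq_nonneg (q x * f (u x) - p x * (deriv f (u x) * u1 x))]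

/-- A crude bound, uniform in the mode but dependent on `u`; it serves only to make the series of
squares summable. -/
lemma square_bound (hL : 0 < L) (h : IsMode L M s p q r) (j : IsJet L B u u1 u2 u3) :
    (∫ x in (0 : ℝ)..L, ((q x * u x + p x * u1 x) ^ 2
          + (r x * u x + 2 * q x * u1 x + p x * u2 x) ^ 2)) ≤ 100 * M * B ^ 2 * L := by
  have hM := h.nonneg
  have hc : (∫ _ in (0 : ℝ)..L, 100 * M * B ^ 2) = 100 * M * B ^ 2 * L := by
    rw [intervalIntegral.integral_const]; simp [mul_comm]
  rw [← hc]
  refine intervalIntegral.integral_mono_on hL.le ((continuous_square h j).intervalIntegrable _ _)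
    (continuous_const.intervalIntegrable _ _) ?_
  intro x _
  have sq : ∀ {a b : ℝ}, a ^ 2 ≤ M → |b| ≤ B → a ^ 2 * b ^ 2 ≤ M * B ^ 2 := fun ha hb =>
    mul_le_mul ha (sq_le_sq' (abs_le.1 hb).1 (abs_le.1 hb).2) (sq_nonneg _) hM
  have e1 := sq (h.bq x) (j.b0 x)
  have e2 := sq (h.bp x) (j.b1 x)
  have e3 := sq (h.br x) (j.b0 x)
  have e4 := sq (h.bq x) (j.b1 x)
  have e5 := sq (h.bp x) (j.b2 x)
  have s1 : (q x * u x + p x * u1 x) ^ 2 ≤ 2 * (q x ^ 2 * u x ^ 2) + 2 * (p x ^ 2 * u1 x ^ 2) := by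
    nlinarith [sq_nonneg (q x * u x - p x * u1 x)]
  have s2 : (r x * u x + 2 * q x * u1 x + p x * u2 x) ^ 2 ≤ 3 * (r x ^ 2 * u x ^ 2)
      + 12 * (q x ^ 2 * u1 x ^ 2) + 3 * (p x ^ 2 * u2 x ^ 2) := by
    nlinarith [sq_nonneg (r x * u x - 2 * q x * u1 x), sq_nonneg (r x * u x - p x * u2 x),
      sq_nonneg (2 * q x * u1 x - p x * u2 x)]
  have z : 0 ≤ M * B ^ 2 := by positivity
  linarith

end single

/-- Termwise integration against a bounded continuous function of a series with uniformly
summable bounds. -/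
lemma hasSum_integral_mul {L D B : ℝ} {w : ℤ → ℝ} (hw : Summable w)
    (hw0 : ∀ k, 0 ≤ w k) {g : ℤ → ℝ → ℝ} (cg : ∀ k, Continuous (g k))
    (hg : ∀ k x, |g k x| ≤ D) {v : ℝ → ℝ} (cv : Continuous v) (hv : ∀ x, |v x| ≤ B) :
    HasSum (fun k => w k * ∫ x in (0 : ℝ)..L, g k x * v x)
      (∫ x in (0 : ℝ)..L, (∑' k, w k * g k x) * v x) := by
  have hs : ∀ x, Summable fun k => w k * g k x := fun x =>
    Summable.of_norm_bounded (hw.mul_right D) fun k => by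
      rw [norm_mul, Real.norm_of_nonneg (hw0 k)]
      exact mul_le_mul_of_nonneg_left (hg k x) (hw0 k)
  have := intervalIntegral.hasSum_integral_of_dominated_convergence (μ := volume) (a := 0) (b := L)
    (F := fun k x => w k * (g k x * v x)) (f := fun x => (∑' k, w k * g k x) * v x)
    (fun k _ => w k * (D * B))
    (fun k => (continuous_const.mul ((cg k).mul cv)).aestronglyMeasurable)
    (fun k => Filter.Eventually.of_forall fun x _ => by
      rw [norm_mul, Real.norm_of_nonneg (hw0 k)]
      exact mul_le_mul_of_nonneg_left (abs_mul_le' (hg k x) (hv x)) (hw0 k))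
    (Filter.Eventually.of_forall fun x _ => hw.mul_right _)
    (continuous_const.intervalIntegrable _ _)
    (Filter.Eventually.of_forall fun x _ => by
      simpa only [mul_assoc] using (hs x).hasSum.mul_right (v x))
  simpa only [intervalIntegral.integral_const_mul] using this

/-- Coercivity estimate (condition (H3)) for the drift `A^ε` together with the noise
coefficients, with a constant independent of `ε` and `u`. -/
theorem coercivity_estimate (L : ℝ) (hL : 0 < L)
    (lam gam : ℤ → ℝ) (hpos : ∀ k : ℤ, 0 ≤ lam k)
    (hsum : Summable fun k : ℤ => (lam k) ^ 2 + (gam k) ^ 2)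
    (f : ℝ → ℝ) (K : ℝ) (hf : ContDiff ℝ 1 f) (hf0 : f 0 = 0)
    (hfb : ∀ s : ℝ, |deriv f s| ≤ K)
    (hflip : ∀ s t : ℝ, |deriv f s - deriv f t| ≤ K * |s - t|) :
    ∃ C : ℝ, 0 < C ∧
      ∀ ε : ℝ, 0 < ε → ε ≤ 1 →
      ∀ u : ℝ → ℝ, ContDiff ℝ (⊤ : ℕ∞) u → (∀ x : ℝ, u (x + L) = u x) →
        2 * (∫ x in (0 : ℝ)..L, Aop L lam ε u x * u x)
          + 2 * (∫ x in (0 : ℝ)..L, deriv (Aop L lam ε u) x * deriv u x)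
          + (∑' k : ℤ, (lam k) ^ 2
              * ∫ x in (0 : ℝ)..L,
                  ((deriv (fun y => psi L k y * u y) x) ^ 2
                    + (deriv (deriv (fun y => psi L k y * u y)) x) ^ 2))
          + (∑' k : ℤ, (gam k) ^ 2
              * ∫ x in (0 : ℝ)..L,
                  ((psi L k x * f (u x)) ^ 2
                    + (deriv (fun y => psi L k y * f (u y)) x) ^ 2))
          ≤ C * norm12sq L u - 2 * ε * norm22sq L u := by
  have hw : Summable fun k => (lam k) ^ 2 :=
    hsum.of_nonneg_of_le (fun k => sq_nonneg _) fun k => by nlinarith [sq_nonneg (gam k)]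
  have hv : Summable fun k => (gam k) ^ 2 :=
    hsum.of_nonneg_of_le (fun k => sq_nonneg _) fun k => by nlinarith [sq_nonneg (lam k)]
  have hw0 : ∀ k, 0 ≤ (lam k) ^ 2 := fun k => sq_nonneg _
  choose s q r hm using exists_mode L hL
  set M : ℝ := 2 / L with hM
  have hMpos : 0 < M := by positivity
  have hW : 0 ≤ ∑' k, (lam k) ^ 2 := tsum_nonneg hw0
  have hV : 0 ≤ ∑' k, (gam k) ^ 2 := tsum_nonneg fun k => sq_nonneg _
  refine ⟨12 * M * (∑' k, (lam k) ^ 2) + 3 * M * K ^ 2 * (∑' k, (gam k) ^ 2) + 2,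
    by positivity, ?_⟩
  intro ε hε hε1 u hu hper
  obtain ⟨B, j⟩ := exists_jet hL hu hper
  unfold norm12sq norm22sq
  set u1 := deriv u
  set u2 := deriv u1
  set u3 := deriv u2
  set N : ℝ := ∫ x in (0 : ℝ)..L, (u x ^ 2 + u1 x ^ 2) with hN
  set g : ℤ → ℝ → ℝ := fun k x => gTerm (psi L k x) (q k x) (r k x) (u x) (u1 x) (u2 x) with hg
  set g' : ℤ → ℝ → ℝ :=
    fun k x => gTerm' (psi L k x) (q k x) (r k x) (u x) (u1 x) (u2 x) (u3 x) with hg'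
  have cg : ∀ k, Continuous (g k) := fun k => continuous_gTerm (hm k) j
  have cg' : ∀ k, Continuous (g' k) := fun k => continuous_gTerm' (hm k) j
  have bg : ∀ k x, |g k x| ≤ 18 * M * B := fun k x => abs_gTerm_le (hm k) j x
  have bg' : ∀ k x, |g' k x| ≤ 18 * M * B := fun k x => abs_gTerm'_le (hm k) j x
  have bw : ∀ k, ∀ t : ℝ, |t| ≤ 18 * M * B → ‖(lam k) ^ 2 * t‖ ≤ (lam k) ^ 2 * (18 * M * B) :=
    fun k t ht => by
      rw [norm_mul, Real.norm_of_nonneg (hw0 k)]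
      exact mul_le_mul_of_nonneg_left ht (hw0 k)
  have hA : Aop L lam ε u = fun x => (1 / 2) * (∑' k, (lam k) ^ 2 * g k x) + ε * u2 x := by
    funext x
    simp only [Aop, hg]
    congr 2
    exact tsum_congr fun k => by rw [deriv_inner (hm k) j]
  have hA' : deriv (Aop L lam ε u)
      = fun x => (1 / 2) * (∑' k, (lam k) ^ 2 * g' k x) + ε * u3 x := by
    rw [hA]
    funext x
    have hts := hasDerivAt_tsum (g := fun k x => (lam k) ^ 2 * g k x)
      (g' := fun k x => (lam k) ^ 2 * g' k x) (hw.mul_right (18 * M * B))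
      (fun k y => (hasDerivAt_gTerm (hm k) j y).const_mul _)
      (fun k y => bw k _ (bg' k y)) (y₀ := 0)
      (Summable.of_norm_bounded (hw.mul_right (18 * M * B)) fun k => bw k _ (bg k 0)) x
    exact ((hts.const_mul (1 / 2)).add ((j.d2 x).const_mul ε)).deriv
  have cS : ∀ {h : ℤ → ℝ → ℝ}, (∀ k, Continuous (h k)) → (∀ k x, |h k x| ≤ 18 * M * B) →
      Continuous fun x => ∑' k, (lam k) ^ 2 * h k x := fun ch bh =>
    continuous_tsum (fun k => continuous_const.mul (ch k)) (hw.mul_right (18 * M * B))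
      fun k x => bw k _ (bh k x)
  have S1 := hasSum_integral_mul (L := L) hw hw0 cg bg j.c0 j.b0
  have S2 := hasSum_integral_mul (L := L) hw hw0 cg' bg' j.c1 j.b1
  have split : ∀ {a b c : ℝ → ℝ}, Continuous a → Continuous b → Continuous c →
      2 * (∫ x in (0 : ℝ)..L, ((1 / 2) * a x + ε * b x) * c x)
        = (∫ x in (0 : ℝ)..L, a x * c x) + 2 * ε * ∫ x in (0 : ℝ)..L, b x * c x := by
    intro a b c ha hb hc
    rw [← intervalIntegral.integral_const_mul, ← intervalIntegral.integral_const_mul,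
      ← intervalIntegral.integral_add ((by fun_prop : Continuous _).intervalIntegrable _ _)
        ((by fun_prop : Continuous _).intervalIntegrable _ _)]
    congr 1
    funext x
    ring
  have T1 : 2 * (∫ x in (0 : ℝ)..L, Aop L lam ε u x * u x)
      = (∑' k, (lam k) ^ 2 * ∫ x in (0 : ℝ)..L, g k x * u x)
        + 2 * ε * ∫ x in (0 : ℝ)..L, u2 x * u x := by
    rw [hA, S1.tsum_eq]
    exact split (cS cg bg) j.c2 j.c0
  have T2 : 2 * (∫ x in (0 : ℝ)..L, deriv (Aop L lam ε u) x * u1 x)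
      = (∑' k, (lam k) ^ 2 * ∫ x in (0 : ℝ)..L, g' k x * u1 x)
        + 2 * ε * ∫ x in (0 : ℝ)..L, u3 x * u1 x := by
    rw [hA', S2.tsum_eq]
    exact split (cS cg' bg') j.c3 j.c1
  set Q : ℤ → ℝ := fun k => ∫ x in (0 : ℝ)..L,
    ((deriv (fun y => psi L k y * u y) x) ^ 2
      + (deriv (deriv (fun y => psi L k y * u y)) x) ^ 2) with hQ
  have Qeq : ∀ k, Q k = ∫ x in (0 : ℝ)..L, ((q k x * u x + psi L k x * u1 x) ^ 2
      + (r k x * u x + 2 * q k x * u1 x + psi L k x * u2 x) ^ 2) := fun k => by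
    simp only [hQ]
    rw [deriv_deriv_mul_mode (hm k) j, deriv_mul_mode (hm k) j]
  have Q0 : ∀ k, 0 ≤ Q k := fun k =>
    intervalIntegral.integral_nonneg hL.le fun x _ => by positivity
  have S3 : Summable fun k => (lam k) ^ 2 * Q k :=
    (hw.mul_right (100 * M * B ^ 2 * L)).of_nonneg_of_le (fun k => mul_nonneg (hw0 k) (Q0 k))
      fun k => mul_le_mul_of_nonneg_left
        (by rw [Qeq]; exact square_bound hL (hm k) j) (hw0 k)
  have T3 : (∑' k, (lam k) ^ 2 * ∫ x in (0 : ℝ)..L, g k x * u x)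
      + (∑' k, (lam k) ^ 2 * ∫ x in (0 : ℝ)..L, g' k x * u1 x)
      + (∑' k, (lam k) ^ 2 * Q k) ≤ (∑' k, (lam k) ^ 2) * (12 * M * N) := by
    rw [← S1.summable.tsum_add S2.summable, ← (S1.summable.add S2.summable).tsum_add S3,
      ← tsum_mul_right]
    refine ((S1.summable.add S2.summable).add S3).tsum_le_tsum (fun k => ?_) (hw.mul_right _)
    rw [← mul_add, ← mul_add, Qeq]
    exact mul_le_mul_of_nonneg_left (transport_bound hL (hm k) j) (hw0 k)
  have T4 : (∑' k : ℤ, (gam k) ^ 2 * ∫ x in (0 : ℝ)..L, ((psi L k x * f (u x)) ^ 2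
        + (deriv (fun y => psi L k y * f (u y)) x) ^ 2))
      ≤ (∑' k, (gam k) ^ 2) * (3 * M * K ^ 2 * N) := by
    have hle : ∀ k, (gam k) ^ 2 * (∫ x in (0 : ℝ)..L, ((psi L k x * f (u x)) ^ 2
        + (deriv (fun y => psi L k y * f (u y)) x) ^ 2)) ≤ (gam k) ^ 2 * (3 * M * K ^ 2 * N) :=
      fun k => mul_le_mul_of_nonneg_left (noise_bound hL (hm k) j hf hf0 hfb) (sq_nonneg _)
    rw [← tsum_mul_right]
    refine Summable.tsum_le_tsum hle ((hv.mul_right _).of_nonneg_of_le (fun k => ?_) hle)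
      (hv.mul_right _)
    exact mul_nonneg (sq_nonneg _)
      (intervalIntegral.integral_nonneg hL.le fun x _ => by positivity)
  have T5 := viscous_identity j
  have c0 := j.c0
  have c1 := j.c1
  have N0 : (∫ x in (0 : ℝ)..L, u x ^ 2) ≤ N :=
    intervalIntegral.integral_mono_on hL.le ((by fun_prop : Continuous _).intervalIntegrable _ _)
      ((by fun_prop : Continuous _).intervalIntegrable _ _)
      fun x _ => by nlinarith [sq_nonneg (u1 x)]
  have N1 : 0 ≤ N := intervalIntegral.integral_nonneg hL.le fun x _ => by positivity
  have T6 : 2 * ε * (∫ x in (0 : ℝ)..L, u x ^ 2) ≤ 2 * N :=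
    (mul_le_mul_of_nonneg_left N0 (by positivity)).trans (by nlinarith)
  have T7 : 2 * ε * (∫ x in (0 : ℝ)..L, u2 x * u x) + 2 * ε * (∫ x in (0 : ℝ)..L, u3 x * u1 x)
      = 2 * ε * (∫ x in (0 : ℝ)..L, u x ^ 2)
        - 2 * ε * ∫ x in (0 : ℝ)..L, (u x ^ 2 + u1 x ^ 2 + u2 x ^ 2) := by
    rw [← mul_add, T5, mul_sub]
  rw [T1, T2]
  linarith

end
end

section
/- There exists a constant C > 0, independent of ε and u, such that for every ε ∈ (0,1] and every smooth L-periodic function u: ( ∫₀^L (A^ε u)(x)² dx )^{1/2} ≤ C ‖u‖_{2,2}. -/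
/-!
The estimate is pointwise in `x`. By the product rule,
`∂(Ψ ∂(Ψ u)) = (Ψ'² + Ψ Ψ'') u + 3 Ψ Ψ' u' + Ψ² u''`, and the normalization `c_k` makes
`|Ψ_k|, |Ψ_k'|, |Ψ_k''| ≤ M := sqrt (2 / L)` uniformly in `k` (`psi_derivs`). Each summand is thus
at most `λ_k² · 3 M² (|u| + |u'| + |u''|)` (`abs_summand_le`). Summing over `k` and using `ε ≤ 1`
gives `|A^ε u| ≤ D (|u| + |u'| + |u''|)` with `D = (1/2) (Σ λ_k²) · 3 M² + 1`, hence
`(A^ε u)² ≤ 3 D² (u² + u'² + u''²)`, which is then integrated over a period.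
-/

open MeasureTheory

noncomputable section

/-- The normalization `c_k` absorbs up to two factors of the frequency `w = 2πk/L`. -/
lemma cL_bounds (L : ℝ) (hL : 0 < L) (k : ℤ) :
    0 ≤ cL L k ∧ cL L k ≤ √(2 / L) ∧
    cL L k * |2 * Real.pi * (k : ℝ) / L| ≤ √(2 / L) ∧
    cL L k * (2 * Real.pi * (k : ℝ) / L) ^ 2 ≤ √(2 / L) := by
  unfold cL
  generalize 2 * Real.pi * (k : ℝ) / L = w
  have hD : 0 < 1 + w ^ 2 + w ^ 4 := by positivity
  -- After squaring, each bound reads `t² ≤ 1 + w² + w⁴` with `t = 1, |w|, w²`.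
  have key : ∀ t : ℝ, 0 ≤ t → t ^ 2 ≤ 1 + w ^ 2 + w ^ 4 →
      √(2 / (L * (1 + w ^ 2 + w ^ 4))) * t ≤ √(2 / L) := by
    intro t ht h
    apply Real.le_sqrt_of_sq_le
    rw [mul_pow, Real.sq_sqrt (by positivity), div_mul_eq_mul_div, div_le_div_iff₀ (by positivity) hL]
    nlinarith [mul_le_mul_of_nonneg_left h hL.le]
  refine ⟨Real.sqrt_nonneg _, ?_, key _ (abs_nonneg w) ?_, key _ (sq_nonneg w) ?_⟩
  · simpa using key 1 zero_le_one (by nlinarith [sq_nonneg w, sq_nonneg (w ^ 2)])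
  · rw [sq_abs]; nlinarith [sq_nonneg (w ^ 2)]
  · nlinarith [sq_nonneg w]

lemma abs_mul_le_of_abs_le_one {a b M : ℝ} (ha : |a| ≤ M) (hb : |b| ≤ 1) : |a * b| ≤ M := by
  rw [abs_mul]
  exact (mul_le_of_le_one_right (abs_nonneg a) hb).trans ha

/-- `Ψ_k` has first and second derivatives `p`, `q`, and all three functions are bounded by
`sqrt (2 / L)`, uniformly in `k`. -/
lemma psi_derivs (L : ℝ) (hL : 0 < L) (k : ℤ) :
    ∃ p q : ℝ → ℝ, (∀ x, HasDerivAt (psi L k) (p x) x) ∧ (∀ x, HasDerivAt p (q x) x) ∧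
      ∀ x, |psi L k x| ≤ √(2 / L) ∧ |p x| ≤ √(2 / L) ∧ |q x| ≤ √(2 / L) := by
  obtain ⟨h0, h1, h2, h3⟩ := cL_bounds L hL k
  have hlin : ∀ x : ℝ, 2 * Real.pi * (k : ℝ) * x / L = (2 * Real.pi * (k : ℝ) / L) * x := by
    intro x; ring
  set w := 2 * Real.pi * (k : ℝ) / L with hw
  set c := cL L k with hc
  have b0 : |c| ≤ √(2 / L) := by rwa [abs_of_nonneg h0]
  have b1 : |c * w| ≤ √(2 / L) := by rwa [abs_mul, abs_of_nonneg h0]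
  have b1' : |-(c * w)| ≤ √(2 / L) := by rwa [abs_neg]
  have b2 : |-(c * w ^ 2)| ≤ √(2 / L) := by
    rwa [abs_neg, abs_of_nonneg (mul_nonneg h0 (sq_nonneg w))]
  have hlinD : ∀ x : ℝ, HasDerivAt (fun y : ℝ => w * y) w x := fun x => by
    simpa using (hasDerivAt_id x).const_mul w
  rcases lt_trichotomy k 0 with hk | hk | hk
  · have hpsi : psi L k = fun x => c * Real.sin (w * x) := by
      funext x
      simp only [psi, hk.not_gt, hk.ne, if_false, hlin, hc]
    rw [hpsi]
    refine ⟨fun x => c * w * Real.cos (w * x), fun x => -(c * w ^ 2) * Real.sin (w * x),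
      fun x => ?_, fun x => ?_, fun x => ⟨?_, ?_, ?_⟩⟩
    · exact ((hlinD x).sin.const_mul c).congr_deriv (by ring)
    · exact ((hlinD x).cos.const_mul (c * w)).congr_deriv (by ring)
    · exact abs_mul_le_of_abs_le_one b0 (Real.abs_sin_le_one _)
    · exact abs_mul_le_of_abs_le_one b1 (Real.abs_cos_le_one _)
    · exact abs_mul_le_of_abs_le_one b2 (Real.abs_sin_le_one _)
  · have hpsi : psi L k = fun _ => c * (√2)⁻¹ := by
      funext x
      simp [psi, hk, hc, div_eq_mul_inv]
    rw [hpsi]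
    refine ⟨fun _ => 0, fun _ => 0, fun x => hasDerivAt_const x _, fun x => hasDerivAt_const x _,
      fun x => ⟨abs_mul_le_of_abs_le_one b0 ?_, abs_zero.trans_le (Real.sqrt_nonneg _),
        abs_zero.trans_le (Real.sqrt_nonneg _)⟩⟩
    rw [abs_of_nonneg (by positivity)]
    exact inv_le_one_of_one_le₀ (Real.one_le_sqrt.2 one_le_two)
  · have hpsi : psi L k = fun x => c * Real.cos (w * x) := by
      funext x
      simp only [psi, hk, if_true, hlin, hc]
    rw [hpsi]
    refine ⟨fun x => -(c * w) * Real.sin (w * x), fun x => -(c * w ^ 2) * Real.cos (w * x),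
      fun x => ?_, fun x => ?_, fun x => ⟨?_, ?_, ?_⟩⟩
    · exact ((hlinD x).cos.const_mul c).congr_deriv (by ring)
    · exact ((hlinD x).sin.const_mul (-(c * w))).congr_deriv (by ring)
    · exact abs_mul_le_of_abs_le_one b0 (Real.abs_cos_le_one _)
    · exact abs_mul_le_of_abs_le_one b1' (Real.abs_sin_le_one _)
    · exact abs_mul_le_of_abs_le_one b2 (Real.abs_cos_le_one _)

lemma abs_summand_le (L : ℝ) (hL : 0 < L) (k : ℤ) (u : ℝ → ℝ)
    (hu : Differentiable ℝ u) (hu' : Differentiable ℝ (deriv u)) (x : ℝ) :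
    |deriv (fun y => psi L k y * deriv (fun z => psi L k z * u z) y) x|
      ≤ 3 * (2 / L) * (|u x| + |deriv u x| + |deriv (deriv u) x|) := by
  obtain ⟨p, q, hp, hq, hb⟩ := psi_derivs L hL k
  obtain ⟨b0, b1, b2⟩ := hb x
  have hin : deriv (fun z => psi L k z * u z) = fun y => p y * u y + psi L k y * deriv u y := by
    funext y
    exact ((hp y).mul (hu y).hasDerivAt).deriv
  have hout : deriv (fun y => psi L k y * deriv (fun z => psi L k z * u z) y) x
      = (p x * p x + psi L k x * q x) * u x + 3 * (psi L k x * p x) * deriv u x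
        + psi L k x * psi L k x * deriv (deriv u) x := by
    rw [hin]
    have hu1 := (hu x).hasDerivAt
    have hu2 := (hu' x).hasDerivAt
    refine (((hp x).mul (((hq x).mul hu1).add ((hp x).mul hu2))).congr_deriv ?_).deriv
    simp only [Pi.add_apply, Pi.mul_apply]
    ring
  have hM : √(2 / L) * √(2 / L) = 2 / L := Real.mul_self_sqrt (by positivity)
  have prod : ∀ {a b : ℝ}, |a| ≤ √(2 / L) → |b| ≤ √(2 / L) → |a * b| ≤ 2 / L := by
    intro a b ha hb
    rw [abs_mul, ← hM]
    exact mul_le_mul ha hb (abs_nonneg b) (Real.sqrt_nonneg _)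
  have hK : 0 < 2 / L := by positivity
  have c0 : |p x * p x + psi L k x * q x| ≤ 3 * (2 / L) := by
    linarith [abs_add_le (p x * p x) (psi L k x * q x), prod b1 b1, prod b0 b2]
  have c1 : |3 * (psi L k x * p x)| ≤ 3 * (2 / L) := by
    rw [abs_mul, abs_of_pos (by norm_num : (0 : ℝ) < 3)]
    linarith [prod b0 b1]
  have c2 : |psi L k x * psi L k x| ≤ 3 * (2 / L) := by linarith [prod b0 b0]
  rw [hout]
  refine (abs_add_three _ _ _).trans ?_
  rw [abs_mul _ (u x), abs_mul _ (deriv u x), abs_mul _ (deriv (deriv u) x), mul_add, mul_add]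
  gcongr

/-- Growth estimate (condition (H4')): `‖A^ε u‖_{L²} ≤ C ‖u‖_{2,2}`, with a constant
independent of `ε` and `u`. -/
theorem Aop_growth_estimate (L : ℝ) (hL : 0 < L) (lam : ℤ → ℝ)
    (hpos : ∀ k : ℤ, 0 ≤ lam k) (hsum : Summable fun k : ℤ => (lam k) ^ 2) :
    ∃ C : ℝ, 0 < C ∧
      ∀ ε : ℝ, 0 < ε → ε ≤ 1 →
      ∀ u : ℝ → ℝ, ContDiff ℝ (⊤ : ℕ∞) u → (∀ x : ℝ, u (x + L) = u x) →
        Real.sqrt (∫ x in (0 : ℝ)..L, (Aop L lam ε u x) ^ 2)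
          ≤ C * Real.sqrt (norm22sq L u) := by
  set S := ∑' k : ℤ, (lam k) ^ 2 with hS
  have hS0 : 0 ≤ S := tsum_nonneg fun k => sq_nonneg _
  set D := (1 / 2) * (S * (3 * (2 / L))) + 1 with hD
  have hDpos : 0 < D := by positivity
  refine ⟨√3 * D, by positivity, fun ε hε hε1 u hu _ => ?_⟩
  have hu0 : Differentiable ℝ u := hu.differentiable (by simp)
  have hu1 : ContDiff ℝ (⊤ : ℕ∞) (deriv u) := (contDiff_infty_iff_deriv.1 hu).2
  have hu1d : Differentiable ℝ (deriv u) := hu1.differentiable (by simp)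
  have hu2 : ContDiff ℝ (⊤ : ℕ∞) (deriv (deriv u)) := (contDiff_infty_iff_deriv.1 hu1).2
  have hpt : ∀ x, |Aop L lam ε u x| ≤ D * (|u x| + |deriv u x| + |deriv (deriv u) x|) := by
    intro x
    set T := |u x| + |deriv u x| + |deriv (deriv u) x| with hT
    have hsumle : ‖∑' k : ℤ, (lam k) ^ 2 *
        deriv (fun y => psi L k y * deriv (fun z => psi L k z * u z) y) x‖
          ≤ S * (3 * (2 / L) * T) := by
      refine tsum_of_norm_bounded (hsum.hasSum.mul_right _) fun k => ?_
      rw [Real.norm_eq_abs, abs_mul, abs_of_nonneg (sq_nonneg (lam k))]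
      exact mul_le_mul_of_nonneg_left (abs_summand_le L hL k u hu0 hu1d x) (sq_nonneg _)
    rw [Real.norm_eq_abs] at hsumle
    have hlast : |ε * deriv (deriv u) x| ≤ T := by
      rw [abs_mul, abs_of_pos hε]
      have := mul_le_of_le_one_left (abs_nonneg (deriv (deriv u) x)) hε1
      linarith [abs_nonneg (u x), abs_nonneg (deriv u x)]
    unfold Aop
    refine (abs_add_le _ _).trans ?_
    rw [abs_mul, abs_of_pos (by norm_num : (0 : ℝ) < 1 / 2)]
    calc _ ≤ 1 / 2 * (S * (3 * (2 / L) * T)) + T := by gcongr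
      _ = D * T := by rw [hD]; ring
  have hsq : ∀ x, (Aop L lam ε u x) ^ 2
      ≤ 3 * D ^ 2 * ((u x) ^ 2 + (deriv u x) ^ 2 + (deriv (deriv u) x) ^ 2) := by
    intro x
    have h3 : (|u x| + |deriv u x| + |deriv (deriv u) x|) ^ 2
        ≤ 3 * ((u x) ^ 2 + (deriv u x) ^ 2 + (deriv (deriv u) x) ^ 2) := by
      rw [← sq_abs (u x), ← sq_abs (deriv u x), ← sq_abs (deriv (deriv u) x)]
      nlinarith [sq_nonneg (|u x| - |deriv u x|), sq_nonneg (|u x| - |deriv (deriv u) x|),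
        sq_nonneg (|deriv u x| - |deriv (deriv u) x|)]
    calc (Aop L lam ε u x) ^ 2 = |Aop L lam ε u x| ^ 2 := (sq_abs _).symm
      _ ≤ (D * (|u x| + |deriv u x| + |deriv (deriv u) x|)) ^ 2 := by gcongr; exact hpt x
      _ = D ^ 2 * (|u x| + |deriv u x| + |deriv (deriv u) x|) ^ 2 := by ring
      _ ≤ D ^ 2 * (3 * ((u x) ^ 2 + (deriv u x) ^ 2 + (deriv (deriv u) x) ^ 2)) := by gcongr
      _ = _ := by ring
  have hcont : Continuous fun x =>
      3 * D ^ 2 * ((u x) ^ 2 + (deriv u x) ^ 2 + (deriv (deriv u) x) ^ 2) := by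
    have := hu.continuous
    have := hu1.continuous
    have := hu2.continuous
    fun_prop
  -- Monotonicity of the integral for a nonnegative integrand needs only the majorant integrable,
  -- so no measurability of `A^ε u` has to be established.
  have hint : ∫ x in (0 : ℝ)..L, (Aop L lam ε u x) ^ 2 ≤ 3 * D ^ 2 * norm22sq L u := by
    unfold norm22sq
    rw [← intervalIntegral.integral_const_mul, intervalIntegral.integral_of_le hL.le,
      intervalIntegral.integral_of_le hL.le]
    refine integral_mono_of_nonneg (Filter.Eventually.of_forall fun x => sq_nonneg _) ?_
      (Filter.Eventually.of_forall hsq)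
    exact (hcont.intervalIntegrable 0 L).1
  calc √(∫ x in (0 : ℝ)..L, (Aop L lam ε u x) ^ 2) ≤ √(3 * D ^ 2 * norm22sq L u) :=
        Real.sqrt_le_sqrt hint
    _ = √3 * D * √(norm22sq L u) := by
        rw [Real.sqrt_mul (by positivity), Real.sqrt_mul (by norm_num), Real.sqrt_sq hDpos.le]

end
end
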